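/- Let q be a prime power and n an integer with 1 < n < q and (n-1) dividing (q-1). Then every element of the finite field F_q is the sum of a 5-potent element and an n-potent element if and only if the pair (q,n) is one of (3,2), (5,2), (5,3), (7,4), (9,3), (9,5), (13,5), (13,7), (17,9), (25,9), (25,13), (29,15), (41,21), (49,25), (53,27), (73,37), (81,41), (125,63). -/

import Mathlib

/-!
Write `n - 1 = (q - 1) / k`, so that the nonzero `n`-potents are the nonzero `k`-th powers. A cover
`C_5 + C_n = F` requires `q < |C_5| |C_n|`. Refined by counting repeated sums, this leaves only
`k ≤ 4`, apart from very small fields. If `q` is even or `q ≡ 3 mod 4`, then `C_5` is smaller and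
counting almost suffices; the case `k = 4` is contained in the case `k = 2`.

For `k = 2`, let `χ` be the quadratic character. In a cover, every `x` outside `C_5` has some
`c ∈ C_5` with `χ (x - c) = 1`, that is, `∏ (1 - χ (x - c)) = 0`. The expansion of the sum of these
products over all `x` is `q` plus sums of `χ` over polynomials of degree at most `5`. Substitutions
reduce each of these to cubics, hence they are of size `O(√q)` by Hasse's bound, and `q` is bounded.
For `k = 3`, the same is done with the sum of the two cubic characters.

Hasse's bound for cubics is obtained by Manin's method: on the curve `y² = f(x)` over `F(X)`,
twisted by `f(X)`, the degrees of the abscissas of the points `Frob + n Q` are the values of a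
quadratic polynomial in `n`. Since they are nonnegative, its discriminant is bounded.

The remaining fields are decided by computing with lists of coefficients over the prime field.
-/

namespace SumOfPotents

section Forms

variable {R : Type*} [CommRing R]

/-- The product form of the abscissas of `P ± Q` on `y² = x³ + a x² + b x + c`: if `x(P) = p / r`
and `x(Q) = t`, then `x(P + Q) x(P - Q)` is `prodForm a b c t p r / (p - t r)²`. -/
def prodForm (a b c t p r : R) : R :=
  p ^ 2 * t ^ 2 - 2 * b * p * r * t - 4 * c * r * (p + t * r) + (b ^ 2 - 4 * a * c) * r ^ 2

/-- The sum form of the abscissas of `P ± Q`: with the notation of `prodForm`, the sum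
`x(P + Q) + x(P - Q)` is `sumForm a b c t p r / (p - t r)²`. -/
def sumForm (a b c t p r : R) : R :=
  2 * p * t * (p + t * r) + 4 * a * p * t * r + 2 * b * r * (p + t * r) + 4 * c * r ^ 2

/-- The quadratic form whose zeros `p' / r'` are the abscissas of the two points `P ± Q`, where
`x(P) = p / r` and `x(Q) = t`. -/
def adjForm (a b c t p r p' r' : R) : R :=
  (p - t * r) ^ 2 * p' ^ 2 - sumForm a b c t p r * p' * r' + prodForm a b c t p r * r' ^ 2

theorem adjForm_comm (a b c t p r p' r' : R) :
    adjForm a b c t p r p' r' = adjForm a b c t p' r' p r := by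
  unfold adjForm sumForm prodForm; ring

theorem adjForm_mul_mul (a b c t k p r p' r' : R) :
    adjForm a b c t p r (k * p') (k * r') = k ^ 2 * adjForm a b c t p r p' r' := by
  unfold adjForm; ring

/-- Vieta jumping: the root `p / r` of a quadratic form determines the other root `p' / r'`. -/
theorem exists_other_root [IsDomain R] {A B C p r : R} (hp : p ≠ 0) (hpr : IsCoprime p r)
    (h : C * p ^ 2 - B * p * r + A * r ^ 2 = 0) :
    ∃ p' r', p * p' = A ∧ r * r' = C ∧ p * r' + p' * r = B := by
  obtain ⟨p', rfl⟩ : p ∣ A :=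
    (hpr.pow_right (n := 2)).dvd_of_dvd_mul_right ⟨B * r - C * p, by linear_combination h⟩
  have hlin : C * p - B * r + p' * r ^ 2 = 0 := by
    apply mul_left_cancel₀ hp; linear_combination h
  by_cases hr : r = 0
  · subst hr
    obtain ⟨v, hv⟩ := (isCoprime_zero_right.1 hpr).exists_right_inv
    have hC : C = 0 := by simpa [hp] using hlin
    exact ⟨p', v * B, rfl, by simp [hC], by linear_combination B * hv⟩
  · obtain ⟨r', rfl⟩ : r ∣ C :=
      hpr.symm.dvd_of_dvd_mul_right ⟨B - p' * r, by linear_combination hlin⟩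
    exact ⟨p', r', rfl, rfl, by apply mul_left_cancel₀ hr; linear_combination hlin⟩

theorem discr_eq_mul_add_mul_deriv (a b c t : R) :
    (Cubic.mk 1 a b c).discr =
      ((18 * b - 6 * a ^ 2) * t + 15 * a * b - 4 * a ^ 3 - 27 * c) *
        (t ^ 3 + a * t ^ 2 + b * t + c) -
      ((6 * b - 2 * a ^ 2) * t ^ 2 + (7 * a * b - 2 * a ^ 3 - 9 * c) * t
        + 4 * b ^ 2 - a ^ 2 * b - 3 * a * c) * (3 * t ^ 2 + 2 * a * t + b) := by
  unfold Cubic.discr; ring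

/-- If `P ± Q` reduce to the same indeterminate abscissa `0 / 0` at `π`, then modulo `π` we have
`x(P) = t`, and `t` is a double root of the cubic. -/
theorem dvd_four_mul_discr {a b c t p r π : R} (hπ : Prime π) (hpr : IsCoprime p r)
    (hprod : π ∣ prodForm a b c t p r) (hsum : π ∣ sumForm a b c t p r)
    (hsq : π ∣ (p - t * r) ^ 2) : π ∣ 4 * (Cubic.mk 1 a b c).discr := by
  have hsub : π ∣ p - t * r := hπ.dvd_of_dvd_pow hsq
  have hr : ¬π ∣ r := fun hr =>
    hπ.not_isUnit (hpr.isUnit_of_dvd' ((dvd_sub_left (hr.mul_left t)).1 hsub) hr)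
  have cancel_sq {g : R} (hg : π ∣ g * r ^ 2) : π ∣ g :=
    (hπ.dvd_or_dvd hg).resolve_right fun h => hr (hπ.dvd_of_dvd_pow h)
  set f := t ^ 3 + a * t ^ 2 + b * t + c
  set f' := 3 * t ^ 2 + 2 * a * t + b
  have hfd : π ∣ 4 * f := by
    apply cancel_sq
    convert! dvd_sub hsum
      (hsub.mul_right (2 * t * (p + 2 * t * r) + 4 * a * t * r + 2 * b * r)) using 1
    unfold sumForm; ring
  have hfd' : π ∣ 4 * f' := by
    have : π ∣ f' ^ 2 - (8 * t + 4 * a) * f := by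
      apply cancel_sq
      convert! dvd_sub hprod
        (hsub.mul_right (t ^ 2 * (p + t * r) - 2 * b * r * t - 4 * c * r)) using 1
      unfold prodForm; ring
    apply hπ.dvd_of_dvd_pow (n := 2)
    convert! dvd_add (this.mul_left 16) (hfd.mul_left (16 * (2 * t + a))) using 1
    ring
  rw [discr_eq_mul_add_mul_deriv a b c t, mul_sub, mul_left_comm, mul_left_comm 4]
  exact dvd_sub (hfd.mul_left _) (hfd'.mul_left _)

/-- The quadratic equation for `x(φ - ε Q)`, where `Q = (t, √f(t))` and `φ = (x, √f(t) y)` with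
`f(t) y² = f(x)`. -/
theorem adjForm_eq_zero_of_mul_sq_eq {a b c t x y e N : R}
    (hxy : (t ^ 3 + a * t ^ 2 + b * t + c) * y ^ 2 = x ^ 3 + a * x ^ 2 + b * x + c)
    (he : e ^ 2 = 1)
    (hN : N = (t ^ 3 + a * t ^ 2 + b * t + c) * (y - e) ^ 2 - (x + t + a) * (x - t) ^ 2) :
    adjForm a b c t x 1 N ((x - t) ^ 2) = 0 := by
  set f := t ^ 3 + a * t ^ 2 + b * t + c with hf
  have hN' : N = x ^ 2 * t + x * t ^ 2 + 2 * a * x * t + b * (x + t) + 2 * c - 2 * e * (f * y) := by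
    linear_combination hN + hxy + f * he + hf
  subst hN'
  unfold adjForm sumForm prodForm
  linear_combination (x - t) ^ 2 * (4 * f ^ 2 * y ^ 2 * he + 4 * f * hxy)

end Forms

section Descent

open Polynomial

variable {F : Type*} [Field F] {a b c : F} {p r p' r' : F[X]}

theorem natDegree_X_mul_le_of_degree_lt (h : r.degree < p.degree) :
    (X * r).natDegree ≤ p.natDegree := by
  by_cases hr : r = 0
  · simp [hr]
  · rw [natDegree_X_mul hr]
    exact natDegree_lt_natDegree hr h

theorem natDegree_prodForm (hp : p ≠ 0) (h : r.degree < p.degree) :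
    (prodForm (C a) (C b) (C c) X p r).natDegree = 2 * p.natDegree + 2 := by
  have hX : (X * r).natDegree ≤ p.natDegree := natDegree_X_mul_le_of_degree_lt h
  have hr : r.natDegree ≤ p.natDegree := natDegree_le_natDegree h.le
  have hlead : (X ^ 2 * p ^ 2).natDegree = 2 * p.natDegree + 2 := by
    rw [natDegree_mul (by simp) (by simp [hp]), natDegree_X_pow, natDegree_pow, add_comm]
  have hsplit : prodForm (C a) (C b) (C c) X p r = X ^ 2 * p ^ 2 +
      (C (-2 * b) * (p * (X * r)) + C (-4 * c) * (r * (p + X * r)) +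
        C (b ^ 2 - 4 * a * c) * (r * r)) := by
    unfold prodForm; simp only [C_mul, C_sub, C_pow, C_neg, C_ofNat]; ring
  rw [hsplit, natDegree_add_eq_left_of_natDegree_lt, hlead]
  rw [hlead]
  refine lt_of_le_of_lt (b := p.natDegree + p.natDegree) ?_ (by omega)
  refine natDegree_add_le_of_degree_le (natDegree_add_le_of_degree_le ?_ ?_) ?_ <;>
    refine (natDegree_C_mul_le _ _).trans (natDegree_mul_le_of_le ?_ ?_) <;> try assumption
  · exact le_rfl
  · exact natDegree_add_le_of_degree_le le_rfl hX

theorem natDegree_sumForm_le (h : r.degree < p.degree) :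
    (sumForm (C a) (C b) (C c) X p r).natDegree ≤ 2 * p.natDegree + 1 := by
  have hX : (X * r).natDegree ≤ p.natDegree := natDegree_X_mul_le_of_degree_lt h
  have hr : r.natDegree ≤ p.natDegree := natDegree_le_natDegree h.le
  have hs : (p + X * r).natDegree ≤ p.natDegree := natDegree_add_le_of_degree_le le_rfl hX
  have hsplit : sumForm (C a) (C b) (C c) X p r = X * (C 2 * (p * (p + X * r))) +
      (C (4 * a) * (p * (X * r)) + C (2 * b) * (r * (p + X * r)) +
        C (4 * c) * (r * r)) := by
    unfold sumForm; simp only [C_mul, C_ofNat]; ring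
  rw [hsplit]
  refine natDegree_add_le_of_degree_le ?_ ?_
  · refine (natDegree_mul_le_of_le (m := 1) (n := p.natDegree + p.natDegree) natDegree_X_le
      ?_).trans (by omega)
    exact (natDegree_C_mul_le _ _).trans (natDegree_mul_le_of_le le_rfl hs)
  · refine le_trans (b := p.natDegree + p.natDegree) ?_ (by omega)
    refine natDegree_add_le_of_degree_le (natDegree_add_le_of_degree_le ?_ ?_) ?_ <;>
      refine (natDegree_C_mul_le _ _).trans (natDegree_mul_le_of_le ?_ ?_) <;>
        first | assumption | exact le_rfl

/-- A fraction `p / r` in lowest terms that has a pole at infinity. -/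
structure IsReducedPolar (p r : F[X]) : Prop where
  coprime : IsCoprime p r
  degree_lt : r.degree < p.degree

theorem IsReducedPolar.ne_zero (h : IsReducedPolar p r) : p ≠ 0 :=
  ne_zero_of_degree_gt h.degree_lt

/-- The fractions `p / r` and `p' / r'`, both in lowest terms and with a pole at infinity, are the
abscissas of two points over `F(X)` that differ by a point `Q` with abscissa `X`. -/
structure Adjacent (a b c : F) (p r p' r' : F[X]) : Prop where
  left : IsReducedPolar p r
  right : IsReducedPolar p' r'
  adjForm_eq_zero : adjForm (C a) (C b) (C c) X p r p' r' = 0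

theorem degree_lt_of_natDegree_add_lt {p'' r'' : F[X]} (hp'' : p'' ≠ 0)
    (h : r'.degree < p'.degree)
    (hadd : (p' * r'' + p'' * r').natDegree < p'.natDegree + p''.natDegree) :
    r''.degree < p''.degree := by
  by_contra! hle
  have hp' : p' ≠ 0 := ne_zero_of_degree_gt h
  have hr'' : r'' ≠ 0 := by rintro rfl; simp_all
  have hlt : (p'' * r').degree < (p' * r'').degree := by
    rw [degree_mul, degree_mul, add_comm]
    exact (WithBot.add_lt_add_right (degree_ne_bot.2 hp'') h).trans_le (by gcongr)
  rw [natDegree_add_eq_left_of_degree_lt hlt, natDegree_mul hp' hr''] at hadd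
  have := natDegree_le_natDegree hle
  omega

theorem isCoprime_of_mul_eq_forms (h2 : (2 : F) ≠ 0) (hd : (Cubic.mk 1 a b c).discr ≠ 0)
    {p'' r'' : F[X]} (hpr : IsCoprime p r) (hp'' : p'' ≠ 0)
    (hprod : p' * p'' = prodForm (C a) (C b) (C c) X p r)
    (hsq : r' * r'' = (p - X * r) ^ 2)
    (hsum : p' * r'' + p'' * r' = sumForm (C a) (C b) (C c) X p r) : IsCoprime p'' r'' := by
  refine isCoprime_of_prime_dvd (fun h => hp'' h.1) fun π hπ hπp hπr => hπ.not_isUnit ?_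
  have hdvd : π ∣ 4 * (Cubic.mk 1 (C a) (C b) (C c)).discr :=
    dvd_four_mul_discr hπ hpr (hprod ▸ hπp.mul_left _)
      (hsum ▸ dvd_add (hπr.mul_left _) (hπp.mul_right _)) (hsq ▸ hπr.mul_left _)
  have hC : 4 * (Cubic.mk 1 (C a) (C b) (C c)).discr = C (4 * (Cubic.mk 1 a b c).discr) := by
    simp [Cubic.discr, C_ofNat]
  have h4 : (4 : F) ≠ 0 := by convert! mul_ne_zero h2 h2 using 1; norm_num
  exact isUnit_of_dvd_unit (hC ▸ hdvd) (isUnit_C.2 (mul_ne_zero h4 hd).isUnit)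

theorem Adjacent.exists_next (h2 : (2 : F) ≠ 0) (hd : (Cubic.mk 1 a b c).discr ≠ 0)
    (h : Adjacent a b c p r p' r') :
    ∃ p'' r'', Adjacent a b c p'' r'' p r ∧
      p''.natDegree + p'.natDegree = 2 * p.natDegree + 2 := by
  have hp' := h.right.ne_zero
  obtain ⟨p'', r'', hprod, hsq, hsum⟩ :=
    exists_other_root hp' h.right.coprime h.adjForm_eq_zero
  have hdeg := natDegree_prodForm (a := a) (b := b) (c := c) h.left.ne_zero h.left.degree_lt
  have hsum_le := natDegree_sumForm_le (a := a) (b := b) (c := c) h.left.degree_lt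
  have hp'' : p'' ≠ 0 := by
    rintro rfl
    rw [← hprod, mul_zero, natDegree_zero] at hdeg
    omega
  rw [← hprod, natDegree_mul hp' hp''] at hdeg
  refine ⟨p'', r'', ⟨⟨?_, ?_⟩, h.left, ?_⟩, by omega⟩
  · exact isCoprime_of_mul_eq_forms h2 hd h.left.coprime hp'' hprod hsq hsum
  · exact degree_lt_of_natDegree_add_lt hp'' h.right.degree_lt (by rw [hsum]; omega)
  · rw [adjForm_comm, adjForm, ← hprod, ← hsum, ← hsq]; ring

/-- The degrees of the abscissas of the points `P + n Q` form a quadratic sequence with second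
difference `2`. -/
theorem Adjacent.exists_natDegree (h2 : (2 : F) ≠ 0) (hd : (Cubic.mk 1 a b c).discr ≠ 0)
    (h : Adjacent a b c p r p' r') (n : ℕ) :
    ∃ P R P' R', Adjacent a b c P R P' R' ∧
      (P'.natDegree : ℤ) = n ^ 2 + n * (p.natDegree - p'.natDegree - 1) + p'.natDegree ∧
      (P.natDegree : ℤ) = P'.natDegree + 2 * n + (p.natDegree - p'.natDegree) := by
  induction n with
  | zero => exact ⟨p, r, p', r', h, by simp, by simp⟩
  | succ n ih =>
    obtain ⟨P, R, P', R', hadj, hP', hP⟩ := ih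
    obtain ⟨Q, S, hnext, hQ⟩ := hadj.exists_next h2 hd
    refine ⟨Q, S, P, R, hnext, by push_cast; linarith, ?_⟩
    zify at hQ; push_cast; linarith

theorem IsReducedPolar.exists_adjacent (h : IsReducedPolar p' r') {N M D : F[X]}
    (hNM : M.degree < N.degree) (hDN : D ∣ N) (hDM : D ∣ M)
    (hrel : adjForm (C a) (C b) (C c) X p' r' N M = 0) :
    ∃ p r, Adjacent a b c p r p' r' ∧ D.natDegree + p.natDegree ≤ N.natDegree := by
  have hN : N ≠ 0 := ne_zero_of_degree_gt hNM
  obtain ⟨u, v, huv⟩ := IsBezout.gcd_eq_sum N M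
  have hDg : D ∣ IsBezout.gcd N M := IsBezout.dvd_gcd hDN hDM
  obtain ⟨p, hp⟩ := IsBezout.gcd_dvd_left N M
  obtain ⟨r, hr⟩ := IsBezout.gcd_dvd_right N M
  generalize IsBezout.gcd N M = g at *
  have hg0 : g ≠ 0 := by rintro h0; exact hN (by rw [hp, h0, zero_mul])
  have hp0 : p ≠ 0 := by rintro rfl; exact hN (by rw [hp, mul_zero])
  refine ⟨p, r, ⟨⟨?_, ?_⟩, h, ?_⟩, ?_⟩
  · refine ⟨u, v, mul_left_cancel₀ hg0 ?_⟩
    linear_combination huv - u * hp - v * hr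
  · rw [hp, hr, degree_mul, degree_mul] at hNM
    exact lt_of_add_lt_add_left hNM
  · rw [hp, hr, adjForm_mul_mul, adjForm_comm] at hrel
    exact (mul_eq_zero.1 hrel).resolve_left (pow_ne_zero 2 hg0)
  · rw [hp, natDegree_mul hg0 hp0]
    gcongr
    exact natDegree_le_of_dvd hDg hg0

end Descent

section Frobenius

open Polynomial

theorem C_units_sq {R : Type*} [CommRing R] (ε : ℤˣ) : (C ((ε : ℤ) : R)) ^ 2 = 1 := by
  rcases Int.units_eq_one_or ε with rfl | rfl <;> simp

variable {F : Type*} [Field F] [Fintype F]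

/-- The cubic `X³ + a X² + b X + c`. -/
noncomputable def monicCubic {R : Type*} [CommRing R] (a b c : R) : R[X] :=
  X ^ 3 + C a * X ^ 2 + C b * X + C c

/-- The numerator of the abscissa of `Frob - ε Q` over the denominator `(X ^ q - X) ^ 2`, where
`q` is the cardinality of `F`, `Q = (X, √f)` is the generic point of the curve
`y² = f(x) = x³ + a x² + b x + c` and `Frob = (X ^ q, √f ^ q)`. -/
noncomputable def frobeniusNumerator (a b c : F) (ε : ℤˣ) : F[X] :=
  monicCubic a b c * (monicCubic a b c ^ (Fintype.card F / 2) - C ((ε : ℤ) : F)) ^ 2 -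
    (X ^ Fintype.card F + X + C a) * (X ^ Fintype.card F - X) ^ 2

theorem monicCubic_mul_sq (hF : ringChar F ≠ 2) (a b c : F) :
    monicCubic a b c * (monicCubic a b c ^ (Fintype.card F / 2)) ^ 2 =
      (X ^ Fintype.card F) ^ 3 + C a * (X ^ Fintype.card F) ^ 2 + C b * X ^ Fintype.card F +
        C c := by
  have hodd : Fintype.card F % 2 = 1 := FiniteField.odd_card_of_char_ne_two hF
  rw [← pow_mul, ← pow_succ', show Fintype.card F / 2 * 2 + 1 = Fintype.card F by omega,
    ← FiniteField.expand_card]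
  simp [monicCubic]

theorem natDegree_frobeniusNumerator (hF : ringChar F ≠ 2) (a b c : F) (ε : ℤˣ) :
    (frobeniusNumerator a b c ε).natDegree = 2 * Fintype.card F + 1 := by
  have hq : 1 < Fintype.card F := Fintype.one_lt_card
  have hodd : Fintype.card F % 2 = 1 := FiniteField.odd_card_of_char_ne_two hF
  have hfrob := monicCubic_mul_sq hF a b c
  have hε := C_units_sq (R := F) ε
  set q := Fintype.card F
  set f := monicCubic a b c with hf
  rw [monicCubic] at hf
  have hf3 : f.natDegree ≤ 3 := by rw [hf]; compute_degree
  have hsplit : frobeniusNumerator a b c ε = X ^ (2 * q + 1) + (X ^ (q + 2) +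
      C (2 * a) * X ^ (q + 1) + C b * (X ^ q + X) + C (2 * c) +
      C (-2 * (ε : ℤ) : F) * f ^ (q / 2 + 1)) := by
    rw [frobeniusNumerator]
    simp only [C_mul, C_neg, C_ofNat]
    rw [show 2 * q = q * 2 by ring]
    linear_combination hfrob + f * hε + hf
  have hdeg : (X ^ (q + 2) + C (2 * a) * X ^ (q + 1) + C b * (X ^ q + X) + C (2 * c) +
      C (-2 * (ε : ℤ) : F) * f ^ (q / 2 + 1)).natDegree < 2 * q + 1 := by
    refine Nat.lt_succ_of_le (natDegree_add_le_of_degree_le (natDegree_add_le_of_degree_le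
      (natDegree_add_le_of_degree_le (natDegree_add_le_of_degree_le ?_ ?_) ?_) ?_) ?_)
    · rw [natDegree_X_pow]; omega
    · exact (natDegree_C_mul_X_pow_le _ _).trans (by omega)
    · refine (natDegree_C_mul_le _ _).trans ?_
      compute_degree
      omega
    · exact (natDegree_C _).le.trans (Nat.zero_le _)
    · refine (natDegree_C_mul_le _ _).trans ((natDegree_pow_le_of_le _ hf3).trans ?_)
      omega
  rw [hsplit, natDegree_add_eq_left_of_natDegree_lt (by rwa [natDegree_X_pow]), natDegree_X_pow]

variable [DecidableEq F]

/-- The multiplicity of `α` as a common root, visible from the values of `f`, of the numerator and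
the denominator of the abscissa of `Frob - ε Q`. -/
def rootMult (f : F[X]) (ε : ℤˣ) (α : F) : ℕ := (1 + ε * quadraticChar F (f.eval α)).toNat

/-- The part of the common factor of numerator and denominator of the abscissa of `Frob - ε Q` that
is visible from the values of `f`. -/
noncomputable def commonFactor (f : F[X]) (ε : ℤˣ) : F[X] := ∏ α, (X - C α) ^ rootMult f ε α

theorem rootMult_cases (hF : ringChar F ≠ 2) (f : F[X]) (ε : ℤˣ) (α : F) :
    rootMult f ε α = 0 ∨ (rootMult f ε α = 1 ∧ f.eval α = 0) ∨
      (rootMult f ε α = 2 ∧ f.eval α ^ (Fintype.card F / 2) = ((ε : ℤ) : F)) := by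
  unfold rootMult
  rw [← quadraticChar_eq_pow_of_char_ne_two' hF]
  by_cases h0 : f.eval α = 0
  · simp [h0]
  rcases quadraticChar_dichotomy h0 with h | h <;>
    rcases Int.units_eq_one_or ε with rfl | rfl <;> simp [h]

theorem natDegree_commonFactor (f : F[X]) (ε : ℤˣ) :
    ((commonFactor f ε).natDegree : ℤ) =
      Fintype.card F + ε * ∑ α, quadraticChar F (f.eval α) := by
  have hmult (α : F) : (rootMult f ε α : ℤ) = 1 + ε * quadraticChar F (f.eval α) := by
    refine Int.toNat_of_nonneg ?_
    by_cases h0 : f.eval α = 0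
    · simp [h0]
    rcases quadraticChar_dichotomy h0 with h | h <;>
      rcases Int.units_eq_one_or ε with rfl | rfl <;> simp [h]
  rw [commonFactor, natDegree_prod _ _ fun α _ => pow_ne_zero _ (X_sub_C_ne_zero α)]
  simp [hmult, Finset.sum_add_distrib, Finset.mul_sum]

theorem commonFactor_dvd {f g : F[X]} {ε : ℤˣ}
    (h : ∀ α, (X - C α) ^ rootMult f ε α ∣ g) : commonFactor f ε ∣ g :=
  Finset.prod_dvd_of_coprime
    (fun _ _ _ _ hne => (isCoprime_X_sub_C_of_isUnit_sub (sub_ne_zero.2 hne).isUnit).pow)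
    fun α _ => h α

theorem commonFactor_dvd_sq (hF : ringChar F ≠ 2) (f : F[X]) (ε : ℤˣ) :
    commonFactor f ε ∣ (X ^ Fintype.card F - X) ^ 2 := by
  refine commonFactor_dvd fun α => (pow_dvd_pow _ (n := 2) ?_).trans (pow_dvd_pow_of_dvd ?_ 2)
  · rcases rootMult_cases hF f ε α with h | h | h <;> omega
  · simp [dvd_iff_isRoot, FiniteField.pow_card]

theorem commonFactor_dvd_frobeniusNumerator (hF : ringChar F ≠ 2) (a b c : F) (ε : ℤˣ) :
    commonFactor (monicCubic a b c) ε ∣ frobeniusNumerator a b c ε := by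
  refine dvd_sub (commonFactor_dvd fun α => ?_) ((commonFactor_dvd_sq hF _ ε).mul_left _)
  rcases rootMult_cases hF (monicCubic a b c) ε α with h | ⟨h, h0⟩ | ⟨h, hpow⟩
  · simp [h]
  · rw [h, pow_one]
    exact (dvd_iff_isRoot.2 h0).mul_right _
  · rw [h]
    refine (pow_dvd_pow_of_dvd (dvd_iff_isRoot.2 ?_) 2).mul_left _
    rw [IsRoot, eval_sub, eval_pow, eval_C, hpow, sub_self]

theorem exists_adjacent_frobenius (hF : ringChar F ≠ 2) (a b c : F) (ε : ℤˣ) :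
    ∃ p r : F[X], Adjacent a b c p r (X ^ Fintype.card F) 1 ∧
      (p.natDegree : ℤ) ≤ Fintype.card F + 1 -
        ε * ∑ x : F, quadraticChar F (x ^ 3 + a * x ^ 2 + b * x + c) := by
  have hq : 1 < Fintype.card F := Fintype.one_lt_card
  have hfrob : IsReducedPolar (X ^ Fintype.card F : F[X]) 1 :=
    ⟨isCoprime_one_right, by rw [degree_one, degree_X_pow]; exact_mod_cast Fintype.card_pos⟩
  have hdeg : ((X ^ Fintype.card F - X : F[X]) ^ 2).degree <
      (frobeniusNumerator a b c ε).degree := by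
    apply degree_lt_degree
    rw [natDegree_frobeniusNumerator hF, natDegree_pow,
      FiniteField.X_pow_card_sub_X_natDegree_eq _ hq]
    exact Nat.lt_succ_self _
  have hrel : adjForm (C a) (C b) (C c) X (X ^ Fintype.card F) 1 (frobeniusNumerator a b c ε)
      ((X ^ Fintype.card F - X) ^ 2) = 0 :=
    adjForm_eq_zero_of_mul_sq_eq (monicCubic_mul_sq hF a b c) (C_units_sq ε) rfl
  obtain ⟨p, r, hadj, hle⟩ := hfrob.exists_adjacent hdeg
    (commonFactor_dvd_frobeniusNumerator hF a b c ε) (commonFactor_dvd_sq hF _ ε) hrel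
  refine ⟨p, r, hadj, ?_⟩
  rw [natDegree_frobeniusNumerator hF] at hle
  have hD := natDegree_commonFactor (monicCubic a b c) ε
  simp only [monicCubic, eval_add, eval_mul, eval_pow, eval_X, eval_C] at hD
  zify at hle
  simp only [monicCubic] at hle
  linarith

theorem sq_le_of_forall_nat {T q : ℤ} (h : ∀ (ε : ℤˣ) (n : ℕ), 0 ≤ (n : ℤ) ^ 2 - n * (ε * T) + q) :
    T ^ 2 ≤ 4 * q + 1 := by
  wlog hT : 0 ≤ T generalizing T
  · rw [← neg_sq]
    exact this (fun ε n => by simpa using h (-ε) n) (by omega)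
  have hn := h 1 (T / 2).toNat
  rw [Int.toNat_of_nonneg (by omega)] at hn
  obtain ⟨k, rfl | rfl⟩ := Int.even_or_odd' T
  · rw [Int.mul_ediv_cancel_left k two_ne_zero] at hn
    norm_num at hn; nlinarith
  · rw [show (2 * k + 1) / 2 = k by omega] at hn
    norm_num at hn; nlinarith

theorem sq_sum_quadraticChar_monicCubic_le (hF : ringChar F ≠ 2) {a b c : F}
    (hd : (Cubic.mk 1 a b c).discr ≠ 0) :
    (∑ x : F, quadraticChar F (x ^ 3 + a * x ^ 2 + b * x + c)) ^ 2 ≤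
      4 * (Fintype.card F : ℤ) + 1 := by
  refine sq_le_of_forall_nat fun ε n => ?_
  obtain ⟨p, r, hadj, hp⟩ := exists_adjacent_frobenius hF a b c ε
  obtain ⟨P, R, P', R', -, hP', -⟩ := hadj.exists_natDegree (Ring.two_ne_zero hF) hd n
  rw [natDegree_X_pow] at hP'
  have hmul := mul_le_mul_of_nonneg_left hp n.cast_nonneg
  have := P'.natDegree.cast_nonneg (α := ℤ)
  linarith

end Frobenius

section SumReindexing

open Finset

variable {F M : Type*} [Field F] [Fintype F] [AddCommMonoid M]

theorem sum_comp_sub (φ : F → M) (c : F) : ∑ x, φ (x - c) = ∑ x, φ x :=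
  Equiv.sum_comp (Equiv.subRight c) φ

theorem sum_comp_mul (φ : F → M) {k : F} (hk : k ≠ 0) : ∑ x, φ (k * x) = ∑ x, φ x :=
  Equiv.sum_comp (Equiv.mulLeft₀ k hk) φ

theorem sum_comp_inv (φ : F → M) : ∑ x, φ x⁻¹ = ∑ x, φ x :=
  Equiv.sum_comp (Equiv.inv F) φ

theorem sum_eq_add_sum_erase_add_inv [DecidableEq F] (φ : F → M) (s : F) :
    ∑ x, φ x = φ s + ∑ v ∈ univ.erase 0, φ (s + v⁻¹) := by
  rw [← Equiv.sum_comp (Equiv.addLeft s) φ, ← sum_comp_inv, ← add_sum_erase _ _ (mem_univ (0 : F))]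
  simp only [Equiv.coe_addLeft, inv_zero, add_zero]

theorem sum_comp_eq_sum_mul_card {α β R : Type*} [Fintype β] [DecidableEq β] [CommSemiring R]
    (s : Finset α) (f : α → β) (φ : β → R) :
    ∑ x ∈ s, φ (f x) = ∑ y, φ y * #{x ∈ s | f x = y} := by
  rw [← sum_fiberwise s f]
  refine sum_congr rfl fun y _ => ?_
  rw [sum_congr rfl fun x hx => by rw [(mem_filter.1 hx).2], sum_const, nsmul_eq_mul, mul_comm]

end SumReindexing

section QuadraticCharacterSums

open Finset

/-- Hasse's bound `2 √q` for a field with `q` elements, rounded to an integer that also dominates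
`√(4 q + 1)`. -/
def hasseBound (q : ℕ) : ℤ := Nat.sqrt (4 * q + 1)

theorem hasseBound_nonneg (q : ℕ) : 0 ≤ hasseBound q := Int.natCast_nonneg _

theorem hasseBound_sq_le (q : ℕ) : hasseBound q ^ 2 ≤ 4 * q + 1 := by
  rw [hasseBound]
  exact_mod_cast Nat.sqrt_le' (4 * q + 1)

variable {F : Type*} [Field F] [Fintype F] [DecidableEq F]

local notation "χ" => quadraticChar F

theorem quadraticChar_mul_sq (a : F) {b : F} (hb : b ≠ 0) : χ (a * b ^ 2) = χ a := by
  rw [map_mul, quadraticChar_sq_one' hb, mul_one]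

theorem abs_quadraticChar_le_one (a : F) : |χ a| ≤ 1 := by
  rcases eq_or_ne a 0 with rfl | ha
  · simp
  · rcases quadraticChar_dichotomy ha with h | h <;> simp [h]

theorem abs_sum_quadraticChar_monicCubic_le (hF : ringChar F ≠ 2) {a b c : F}
    (hd : (Cubic.mk 1 a b c).discr ≠ 0) :
    |∑ x, χ (x ^ 3 + a * x ^ 2 + b * x + c)| ≤ hasseBound (Fintype.card F) := by
  rw [Int.abs_eq_natAbs, hasseBound]
  refine Nat.cast_le.2 (Nat.le_sqrt'.2 ?_)
  zify
  simpa only [sq_abs] using sq_sum_quadraticChar_monicCubic_le hF hd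

theorem abs_sum_quadraticChar_cubic_le (hF : ringChar F ≠ 2) {P : Cubic F} (ha : P.a ≠ 0)
    (hd : P.discr ≠ 0) :
    |∑ x, χ (P.a * x ^ 3 + P.b * x ^ 2 + P.c * x + P.d)| ≤ hasseBound (Fintype.card F) := by
  have hd' : (Cubic.mk 1 P.b (P.a * P.c) (P.a ^ 2 * P.d)).discr ≠ 0 := by
    convert! mul_ne_zero (pow_ne_zero 2 ha) hd using 1
    simp only [Cubic.discr]; ring
  convert abs_sum_quadraticChar_monicCubic_le hF hd' using 2
  rw [← sum_comp_mul (fun z => χ (z ^ 3 + P.b * z ^ 2 + P.a * P.c * z + P.a ^ 2 * P.d)) ha]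
  refine sum_congr rfl fun x _ => ?_
  rw [← quadraticChar_mul_sq (P.a * x ^ 3 + P.b * x ^ 2 + P.c * x + P.d) ha]
  congr 1; ring

/-- The substitution `x = s + 1 / v` turns the quartic into a cubic with the same discriminant. -/
theorem abs_sum_quadraticChar_sub_mul_cubic_le (hF : ringChar F ≠ 2) {P : Cubic F} {s : F}
    (hd : P.discr ≠ 0) (hs : P.a * s ^ 3 + P.b * s ^ 2 + P.c * s + P.d ≠ 0) :
    |∑ x, χ ((x - s) * (P.a * x ^ 3 + P.b * x ^ 2 + P.c * x + P.d))| ≤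
      hasseBound (Fintype.card F) + 1 := by
  set Q : Cubic F := ⟨P.a * s ^ 3 + P.b * s ^ 2 + P.c * s + P.d,
    3 * P.a * s ^ 2 + 2 * P.b * s + P.c, 3 * P.a * s + P.b, P.a⟩ with hQ
  have hdQ : Q.discr ≠ 0 := by
    convert! hd using 1
    simp only [hQ, Cubic.discr]; ring
  have hsubst : ∑ v ∈ univ.erase 0, χ ((s + v⁻¹ - s) *
      (P.a * (s + v⁻¹) ^ 3 + P.b * (s + v⁻¹) ^ 2 + P.c * (s + v⁻¹) + P.d)) =
      ∑ v ∈ univ.erase 0, χ (Q.a * v ^ 3 + Q.b * v ^ 2 + Q.c * v + Q.d) := by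
    refine sum_congr rfl fun v hv => ?_
    have hv : v ≠ 0 := ne_of_mem_erase hv
    rw [← quadraticChar_mul_sq _ (pow_ne_zero 2 hv)]
    congr 1
    simp only [hQ]
    field_simp
    ring
  have herase := add_sum_erase univ (fun v => χ (Q.a * v ^ 3 + Q.b * v ^ 2 + Q.c * v + Q.d))
    (mem_univ (0 : F))
  have hle := abs_le.1 (abs_sum_quadraticChar_cubic_le hF (P := Q) hs hdQ)
  have hPa := abs_le.1 (abs_quadraticChar_le_one (Q.a * 0 ^ 3 + Q.b * 0 ^ 2 + Q.c * 0 + Q.d))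
  rw [sum_eq_add_sum_erase_add_inv _ s, hsubst, sub_self, zero_mul, quadraticChar_zero, zero_add,
    abs_le]
  constructor <;> linarith

theorem sum_quadraticChar_linear (hF : ringChar F ≠ 2) {k : F} (hk : k ≠ 0) (c : F) :
    ∑ x, χ (k * x + c) = 0 := by
  rw [sum_comp_mul (fun x => χ (x + c)) hk, ← quadraticChar_sum_zero hF, ← sum_comp_sub χ (-c)]
  simp only [sub_neg_eq_add]

theorem sum_quadraticChar_sub_mul_sub (hF : ringChar F ≠ 2) {a b : F} (hab : a ≠ b) :
    ∑ x, χ ((x - a) * (x - b)) = -1 := by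
  have hlin := sum_quadraticChar_linear hF (sub_ne_zero.2 hab) 1
  rw [← add_sum_erase _ _ (mem_univ (0 : F)), mul_zero, zero_add, map_one] at hlin
  have hsubst : ∑ v ∈ univ.erase 0, χ ((a + v⁻¹ - a) * (a + v⁻¹ - b)) =
      ∑ v ∈ univ.erase 0, χ ((a - b) * v + 1) := by
    refine sum_congr rfl fun v hv => ?_
    have hv : v ≠ 0 := ne_of_mem_erase hv
    rw [← quadraticChar_mul_sq _ hv]
    congr 1
    field_simp
    ring
  rw [sum_eq_add_sum_erase_add_inv _ a, hsubst, sub_self, zero_mul, quadraticChar_zero]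
  linarith

theorem card_roots_quadratic (hF : ringChar F ≠ 2) (s d : F) :
    (#{x : F | x ^ 2 - s * x + d = 0} : ℤ) = 1 + χ (s ^ 2 - 4 * d) := by
  have h2 : (2 : F) ≠ 0 := Ring.two_ne_zero hF
  rw [add_comm, ← quadraticChar_card_sqrts hF]
  norm_cast
  refine card_bij' (fun x _ => 2 * x - s) (fun y _ => (y + s) / 2) ?_ ?_
    (fun x _ => by field_simp; ring) (fun y _ => by field_simp; ring)
  · intro x hx
    simp only [mem_filter, mem_univ, true_and] at hx
    simp only [Set.mem_toFinset, Set.mem_ofPred_eq]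
    linear_combination 4 * hx
  · intro y hy
    simp only [Set.mem_toFinset, Set.mem_ofPred_eq] at hy
    simp only [mem_filter, mem_univ, true_and]
    field_simp
    linear_combination hy

/-- A root `x` of `X² - s X + j²` satisfies `x (s ± 2 j) = (x ± j)²`. -/
theorem sum_quadraticChar_roots (hF : ringChar F ≠ 2) {j : F} (hj : j ≠ 0) (s : F) :
    ∑ x with x ^ 2 - s * x + j ^ 2 = 0, χ x = χ (s + 2 * j) + χ (s - 2 * j) := by
  have h2 : (2 : F) ≠ 0 := Ring.two_ne_zero hF
  by_cases hs : s ^ 2 - 4 * j ^ 2 = 0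
  · wlog hsj : s = 2 * j generalizing j
    · have hsj' : s = 2 * -j := by
        have : (s - 2 * j) * (s + 2 * j) = 0 := by linear_combination hs
        linear_combination (mul_eq_zero.1 this).resolve_left (sub_ne_zero.2 hsj)
      have := this (neg_ne_zero.2 hj) (by rwa [neg_sq]) hsj'
      rw [neg_sq, mul_neg, ← sub_eq_add_neg, sub_neg_eq_add] at this
      rw [this, add_comm]
    · have hroot (x : F) : x ^ 2 - s * x + j ^ 2 = 0 ↔ x = j := by
        rw [hsj, show x ^ 2 - 2 * j * x + j ^ 2 = (x - j) ^ 2 by ring, sq_eq_zero_iff, sub_eq_zero]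
      rw [filter_congr fun x _ => hroot x, filter_eq', if_pos (mem_univ j), sum_singleton,
        hsj, sub_self, quadraticChar_zero, add_zero, ← quadraticChar_mul_sq j h2]
      congr 1; ring
  · have hprod : s ^ 2 - 4 * j ^ 2 = (s + 2 * j) * (s - 2 * j) := by ring
    obtain ⟨hadd, hsub⟩ := mul_ne_zero_iff.1 (hprod ▸ hs)
    have hχ (e : F) (he : e ^ 2 = j ^ 2) (hse : s + 2 * e ≠ 0) (x : F)
        (hx : x ^ 2 - s * x + j ^ 2 = 0) : χ x = χ (s + 2 * e) := by
      have hmul : x * (s + 2 * e) = (x + e) ^ 2 := by linear_combination -hx - he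
      have hx0 : x ≠ 0 := by rintro rfl; simp [hj] at hx
      have hxe : x + e ≠ 0 := pow_ne_zero_iff two_ne_zero |>.1 (hmul ▸ mul_ne_zero hx0 hse)
      rw [← quadraticChar_mul_sq x hse, ← quadraticChar_mul_sq (s + 2 * e) hxe, ← hmul]
      congr 1; ring
    have htwice : 2 * ∑ x with x ^ 2 - s * x + j ^ 2 = 0, χ x =
        (1 + χ (s ^ 2 - 4 * j ^ 2)) * (χ (s + 2 * j) + χ (s - 2 * j)) := by
      rw [← card_roots_quadratic hF, ← nsmul_eq_mul, ← sum_const, mul_sum]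
      refine sum_congr rfl fun x hx => ?_
      rw [two_mul]
      congr 1
      · exact hχ j rfl hadd x (mem_filter.1 hx).2
      · convert! hχ (-j) (neg_sq j) (by rwa [mul_neg, ← sub_eq_add_neg]) x (mem_filter.1 hx).2
          using 2
        ring
    have hadd_sq := quadraticChar_sq_one hadd
    have hsub_sq := quadraticChar_sq_one hsub
    rw [hprod, map_mul] at htwice
    apply mul_left_cancel₀ (two_ne_zero (α := ℤ))
    linear_combination htwice + χ (s - 2 * j) * hadd_sq + χ (s + 2 * j) * hsub_sq

/-- The substitution `s = x + j² / x` in a sum twisted by the quadratic character. -/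
theorem sum_quadraticChar_mul_comp_add_div (hF : ringChar F ≠ 2) {j : F} (hj : j ≠ 0)
    (φ : F → ℤ) :
    ∑ x, χ x * φ (x + j ^ 2 / x) = ∑ s, φ s * (χ (s + 2 * j) + χ (s - 2 * j)) := by
  rw [← sum_fiberwise univ fun x => x + j ^ 2 / x]
  refine sum_congr rfl fun s _ => ?_
  rw [← sum_quadraticChar_roots hF hj, mul_sum, sum_filter, sum_filter]
  refine sum_congr rfl fun x _ => ?_
  rcases eq_or_ne x 0 with rfl | hx
  · simp
  · have hroot : x + j ^ 2 / x = s ↔ x ^ 2 - s * x + j ^ 2 = 0 := by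
      rw [← sub_eq_zero, ← mul_eq_zero_iff_right hx]
      field_simp
      constructor <;> intro h <;> linear_combination h
    simp only [hroot]
    split_ifs with h
    · rw [hroot.2 h, mul_comm]
    · rfl

end QuadraticCharacterSums

section Potents

open Finset Polynomial

/-- The set `C_n` of the `n`-potents of a finite field. -/
def potents (F : Type*) [Field F] [Fintype F] [DecidableEq F] (n : ℕ) : Finset F :=
  {a | a ^ n = a}

/-- Every element is the sum of an `m`-potent and an `n`-potent, that is, `C_m + C_n = F`. -/
def PotentsCover (F : Type*) [Field F] (m n : ℕ) : Prop :=
  ∀ γ : F, ∃ a b : F, a ^ m = a ∧ b ^ n = b ∧ a + b = γ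

section Cover

variable {F : Type*} [Field F]

theorem pow_mul_add_one_eq_self {b : F} {d : ℕ} (h : b ^ (d + 1) = b) (k : ℕ) :
    b ^ (k * d + 1) = b := by
  induction k with
  | zero => rw [zero_mul, zero_add, pow_one]
  | succ k ih => rw [add_one_mul, add_right_comm, pow_add, ih, ← pow_succ', h]

theorem PotentsCover.mul_add_one {m d : ℕ} (h : PotentsCover F m (d + 1)) (k : ℕ) :
    PotentsCover F m (k * d + 1) := fun γ => by
  obtain ⟨a, b, ha, hb, hab⟩ := h γ
  exact ⟨a, b, ha, pow_mul_add_one_eq_self hb k, hab⟩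

theorem pow_five_eq_self_iff {I : F} (hI : I ^ 2 = -1) {a : F} :
    a ^ 5 = a ↔ a = 0 ∨ a = 1 ∨ a = -1 ∨ a = I ∨ a = -I := by
  have hfactor : a ^ 5 - a = a * ((a - 1) * ((a + 1) * ((a - I) * (a + I)))) := by
    linear_combination (a ^ 3 - a) * hI
  rw [← sub_eq_zero, hfactor]
  simp only [mul_eq_zero, sub_eq_zero, add_eq_zero_iff_eq_neg]

theorem pow_five_eq_self_iff_of_not_isSquare (h : ¬IsSquare (-1 : F)) {a : F} :
    a ^ 5 = a ↔ a ^ 3 = a := by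
  refine ⟨fun ha => ?_, fun ha => by linear_combination (a ^ 2 + 1) * ha⟩
  have hfactor : (a ^ 3 - a) * (a ^ 2 + 1) = 0 := by linear_combination ha
  refine sub_eq_zero.1 ((mul_eq_zero.1 hfactor).resolve_right fun h0 => h ⟨a, ?_⟩)
  linear_combination -h0

end Cover

variable {F : Type*} [Field F] [Fintype F] [DecidableEq F] {m n : ℕ}

theorem mem_potents {a : F} : a ∈ potents F n ↔ a ^ n = a := by simp [potents]

theorem zero_mem_potents (hn : n ≠ 0) : (0 : F) ∈ potents F n := mem_potents.2 (zero_pow hn)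

theorem one_mem_potents : (1 : F) ∈ potents F n := mem_potents.2 (one_pow n)

theorem potents_eq_toFinset_roots (hn : 1 < n) :
    potents F n = (X ^ n - X : F[X]).roots.toFinset := by
  ext a
  simp [mem_potents, FiniteField.X_pow_card_sub_X_ne_zero F hn, sub_eq_zero]

theorem card_potents_le (hn : 1 < n) : #(potents F n) ≤ n := by
  rw [potents_eq_toFinset_roots hn]
  refine (Multiset.toFinset_card_le _).trans ((card_roots' _).trans_eq ?_)
  exact FiniteField.X_pow_card_sub_X_natDegree_eq F hn

theorem prod_sub_potents (hn : 1 < n) (hcard : #(potents F n) = n) (x : F) :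
    ∏ c ∈ potents F n, (x - c) = x ^ n - x := by
  have hdegree := FiniteField.X_pow_card_sub_X_natDegree_eq F hn
  have hroots : (X ^ n - X : F[X]).roots.card = n :=
    (card_roots' _).trans_eq hdegree |>.antisymm <| by
      rw [← hcard]
      nth_rw 1 [potents_eq_toFinset_roots hn, hcard]
      exact Multiset.toFinset_card_le _
  have hnodup : (X ^ n - X : F[X]).roots.Nodup := by
    rw [← Multiset.toFinset_card_eq_card_iff_nodup, ← potents_eq_toFinset_roots hn, hcard, hroots]
  have hmonic : (X ^ n - X : F[X]).Monic := monic_X_pow_sub (by rw [degree_X]; exact_mod_cast hn)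
  have hprod := prod_multiset_X_sub_C_of_monic_of_roots_card_eq hmonic (hroots.trans hdegree.symm)
  have heval := congrArg (eval x) hprod
  rw [eval_multiset_prod, Multiset.map_map] at heval
  rw [potents_eq_toFinset_roots hn, Finset.prod, Multiset.toFinset_val, hnodup.dedup]
  simpa using heval

/-- The sum `1 = 0 + 1 = 1 + 0` is counted twice. -/
theorem PotentsCover.card_lt (hm : m ≠ 0) (hn : n ≠ 0) (h : PotentsCover F m n) :
    Fintype.card F < #(potents F m) * #(potents F n) := by
  have hmem : ((0 : F), (1 : F)) ∈ potents F m ×ˢ potents F n :=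
    mk_mem_product (zero_mem_potents hm) one_mem_potents
  have himage : (univ : Finset F) ⊆
      ((potents F m ×ˢ potents F n).erase (0, 1)).image fun p => p.1 + p.2 := by
    intro γ _
    obtain ⟨a, b, ha, hb, rfl⟩ := h γ
    rw [mem_image]
    by_cases hab : (a, b) = (0, 1)
    · obtain ⟨rfl, rfl⟩ := Prod.mk.inj hab
      exact ⟨(1, 0), by simp [mem_potents, hn], add_comm 1 0⟩
    · exact ⟨(a, b), by simp only [mem_erase, mem_product, mem_potents]; exact ⟨hab, ha, hb⟩, rfl⟩
  rw [← card_univ, ← card_product]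
  exact ((card_le_card himage).trans card_image_le).trans_lt (card_erase_lt_of_mem hmem)

/-- If `C_m ⊆ C_n`, the summand `0 ∈ C_n` is not needed. -/
theorem PotentsCover.card_le_mul (hm : Odd m) (hn : n ≠ 0) (h : PotentsCover F m n)
    (hsub : potents F m ⊆ potents F n) :
    Fintype.card F ≤ #(potents F m) * (#(potents F n) - 1) := by
  have himage : (univ : Finset F) ⊆
      (potents F m ×ˢ (potents F n).erase 0).image fun p => p.1 + p.2 := by
    intro γ _
    obtain ⟨a, b, ha, hb, rfl⟩ := h γ
    simp only [mem_image, mem_product, mem_erase, Prod.exists]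
    rw [← mem_potents] at ha hb
    by_cases hb0 : b = 0
    · by_cases ha0 : a = 0
      · refine ⟨-1, 1, ⟨mem_potents.2 hm.neg_one_pow, one_ne_zero, one_mem_potents⟩, ?_⟩
        rw [ha0, hb0, neg_add_cancel, add_zero]
      · exact ⟨0, a, ⟨zero_mem_potents hm.pos.ne', ha0, hsub ha⟩, by rw [hb0, add_comm]⟩
    · exact ⟨a, b, ⟨ha, hb0, hb⟩, rfl⟩
  rw [← card_erase_of_mem (zero_mem_potents hn), ← card_univ, ← card_product]
  exact (card_le_card himage).trans card_image_le

theorem potents_subset_potents {d e : ℕ} (h : d ∣ e) : potents F (d + 1) ⊆ potents F (e + 1) := by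
  obtain ⟨k, rfl⟩ := h
  intro a ha
  rw [mem_potents] at ha ⊢
  rw [mul_comm, pow_mul_add_one_eq_self ha]

theorem potents_five_of_two_eq_zero (h2 : (2 : F) = 0) : potents F 5 ⊆ {0, 1} := by
  intro a ha
  have hfactor : a * (a - 1) ^ 4 = 0 := by
    linear_combination mem_potents.1 ha + (-2 * a ^ 4 + 3 * a ^ 3 - 2 * a ^ 2 + a) * h2
  simpa [sub_eq_zero] using hfactor

theorem potents_five_eq {I : F} (hI : I ^ 2 = -1) : potents F 5 = {0, 1, -1, I, -I} := by
  ext a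
  simp [mem_potents, pow_five_eq_self_iff hI]

theorem card_potents_three (h2 : (2 : F) ≠ 0) : #(potents F 3) = 3 := by
  have hpotents : potents F 3 = {0, 1, -1} := by
    ext a
    have hfactor : a ^ 3 - a = a * ((a - 1) * (a + 1)) := by ring
    rw [mem_potents, ← sub_eq_zero, hfactor]
    simp [sub_eq_zero, add_eq_zero_iff_eq_neg]
  have h11 : (1 : F) ≠ -1 := fun h => h2 (by linear_combination h)
  rw [hpotents, card_eq_three]
  exact ⟨0, 1, -1, zero_ne_one, (neg_ne_zero.2 one_ne_zero).symm, h11, rfl⟩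

theorem card_potents_five (h2 : (2 : F) ≠ 0) {I : F} (hI : I ^ 2 = -1) : #(potents F 5) = 5 := by
  have hI0 : I ≠ 0 := by rintro rfl; simp at hI
  have hI1 : I ≠ 1 := by rintro rfl; exact h2 (by linear_combination hI)
  have hI1' : I ≠ -1 := by rintro rfl; exact h2 (by linear_combination hI)
  have hII : I ≠ -I := fun h => mul_ne_zero h2 hI0 (by linear_combination h)
  have h11 : (1 : F) ≠ -1 := fun h => h2 (by linear_combination h)
  have hnegI : (1 : F) ≠ -I := fun h => hI1' (by rw [h, neg_neg])
  rw [potents_five_eq hI]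
  repeat rw [card_insert_of_notMem]
  all_goals simp [hI0, hI0.symm, hI1.symm, hI1'.symm, hII, h11, hnegI]

end Potents

section QuadraticSieve

open Finset

theorem sum_prod_one_sub {α ι : Type*} [Fintype α] (s : Finset ι) (f : ι → α → ℤ) :
    ∑ x, ∏ c ∈ s, (1 - f c x) =
      ∑ j ∈ range (#s + 1), (-1) ^ j * ∑ t ∈ powersetCard j s, ∑ x, ∏ c ∈ t, f c x := by
  simp only [sub_eq_add_neg, prod_one_add, prod_neg]
  rw [sum_comm, sum_powerset]
  refine sum_congr rfl fun j _ => ?_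
  rw [mul_sum]
  refine sum_congr rfl fun t ht => ?_
  rw [(mem_powersetCard.1 ht).2, mul_sum]

theorem abs_sum_powersetCard_le {α : Type*} {s : Finset α} {j : ℕ} {W : Finset α → ℤ} {B : ℤ}
    (h : ∀ t, #t = j → |W t| ≤ B) : |∑ t ∈ powersetCard j s, W t| ≤ (#s).choose j * B := by
  refine (abs_sum_le_sum_abs _ _).trans ?_
  rw [← card_powersetCard, ← nsmul_eq_mul]
  exact sum_le_card_nsmul _ _ _ fun t ht => h t (mem_powersetCard.1 ht).2

theorem discr_monic_of_roots {R : Type*} [CommRing R] (a b c : R) :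
    (Cubic.mk 1 (-(a + b + c)) (a * b + b * c + c * a) (-(a * b * c))).discr =
      ((a - b) * (a - c) * (b - c)) ^ 2 := by
  unfold Cubic.discr; ring

theorem discr_monic_of_roots_ne_zero {R : Type*} [CommRing R] [IsDomain R] {a b c : R}
    (hab : a ≠ b) (hac : a ≠ c) (hbc : b ≠ c) :
    (Cubic.mk 1 (-(a + b + c)) (a * b + b * c + c * a) (-(a * b * c))).discr ≠ 0 := by
  rw [discr_monic_of_roots]
  exact pow_ne_zero 2 (mul_ne_zero (mul_ne_zero (sub_ne_zero.2 hab) (sub_ne_zero.2 hac))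
    (sub_ne_zero.2 hbc))

variable {F : Type*} [Field F] [Fintype F]

local notation "χ" => quadraticChar F

section ProductsOverFinsets

variable [DecidableEq F] (hF : ringChar F ≠ 2) {t : Finset F}
include hF

theorem sum_prod_quadraticChar_of_card_one (ht : #t = 1) : ∑ x, ∏ c ∈ t, χ (x - c) = 0 := by
  obtain ⟨a, rfl⟩ := card_eq_one.1 ht
  simp only [prod_singleton]
  rw [sum_comp_sub χ, quadraticChar_sum_zero hF]

theorem sum_prod_quadraticChar_of_card_two (ht : #t = 2) : ∑ x, ∏ c ∈ t, χ (x - c) = -1 := by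
  obtain ⟨a, b, hab, rfl⟩ := card_eq_two.1 ht
  simp only [prod_pair hab, ← map_mul]
  exact sum_quadraticChar_sub_mul_sub hF hab

theorem abs_sum_prod_quadraticChar_le_of_card_three (ht : #t = 3) :
    |∑ x, ∏ c ∈ t, χ (x - c)| ≤ hasseBound (Fintype.card F) := by
  obtain ⟨a, b, c, hab, hac, hbc, rfl⟩ := card_eq_three.1 ht
  convert abs_sum_quadraticChar_monicCubic_le hF (discr_monic_of_roots_ne_zero hab hac hbc)
    using 3 with x
  rw [← map_prod, prod_insert (by simp [hab, hac]), prod_pair hbc]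
  congr 1; ring

theorem abs_sum_prod_quadraticChar_le_of_card_four (ht : #t = 4) :
    |∑ x, ∏ c ∈ t, χ (x - c)| ≤ hasseBound (Fintype.card F) + 1 := by
  obtain ⟨d, u, hd, rfl, hu⟩ := card_eq_succ.1 ht
  obtain ⟨a, b, c, hab, hac, hbc, rfl⟩ := card_eq_three.1 hu
  have hroots (x : F) : 1 * x ^ 3 + -(a + b + c) * x ^ 2 + (a * b + b * c + c * a) * x +
      -(a * b * c) = (x - a) * ((x - b) * (x - c)) := by ring
  have hd' : (d - a) * ((d - b) * (d - c)) ≠ 0 := by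
    simpa [sub_eq_zero] using hd
  convert abs_sum_quadraticChar_sub_mul_cubic_le hF
    (discr_monic_of_roots_ne_zero hab hac hbc) (s := d) (by rwa [hroots]) using 3 with x
  rw [← map_prod, prod_insert hd, prod_insert (by simp [hab, hac]), prod_pair hbc, hroots]

theorem sum_prod_one_sub_of_card_three (ht : #t = 3) :
    ∑ x, ∏ c ∈ t, (1 - χ (x - c)) = Fintype.card F - 3 - ∑ x, ∏ c ∈ t, χ (x - c) := by
  have h1 : ∑ u ∈ powersetCard 1 t, ∑ x, ∏ c ∈ u, χ (x - c) = 0 :=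
    sum_eq_zero fun u hu => sum_prod_quadraticChar_of_card_one hF (mem_powersetCard.1 hu).2
  have h2 : ∑ u ∈ powersetCard 2 t, ∑ x, ∏ c ∈ u, χ (x - c) = -3 := by
    rw [sum_congr rfl fun u hu => sum_prod_quadraticChar_of_card_two hF (mem_powersetCard.1 hu).2,
      sum_const, card_powersetCard, ht]
    rfl
  have h3 : powersetCard 3 t = {t} := by rw [← ht, powersetCard_self]
  rw [sum_prod_one_sub t fun c x => χ (x - c), ht]
  simp only [sum_range_succ, range_zero, sum_empty, h1, h2, h3, powersetCard_zero, sum_singleton,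
    prod_empty, sum_const, card_univ]
  ring

theorem le_sum_prod_one_sub_of_card_five (ht : #t = 5) :
    (Fintype.card F : ℤ) - 15 * hasseBound (Fintype.card F) - 15 ≤
      ∑ x, ∏ c ∈ t, (1 - χ (x - c)) + ∑ x, ∏ c ∈ t, χ (x - c) := by
  have h1 : ∑ u ∈ powersetCard 1 t, ∑ x, ∏ c ∈ u, χ (x - c) = 0 :=
    sum_eq_zero fun u hu => sum_prod_quadraticChar_of_card_one hF (mem_powersetCard.1 hu).2
  have h2 : ∑ u ∈ powersetCard 2 t, ∑ x, ∏ c ∈ u, χ (x - c) = -10 := by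
    rw [sum_congr rfl fun u hu => sum_prod_quadraticChar_of_card_two hF (mem_powersetCard.1 hu).2,
      sum_const, card_powersetCard, ht]
    rfl
  have h3 : |∑ u ∈ powersetCard 3 t, ∑ x, ∏ c ∈ u, χ (x - c)| ≤ (#t).choose 3 * _ :=
    abs_sum_powersetCard_le fun u => abs_sum_prod_quadraticChar_le_of_card_three hF
  have h4 : |∑ u ∈ powersetCard 4 t, ∑ x, ∏ c ∈ u, χ (x - c)| ≤ (#t).choose 4 * _ :=
    abs_sum_powersetCard_le fun u => abs_sum_prod_quadraticChar_le_of_card_four hF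
  have h5 : powersetCard 5 t = {t} := by rw [← ht, powersetCard_self]
  rw [ht, show Nat.choose 5 3 = 10 from rfl, abs_le] at h3
  rw [ht, show Nat.choose 5 4 = 5 from rfl, abs_le] at h4
  push_cast at h3 h4
  rw [sum_prod_one_sub t fun c x => χ (x - c), ht]
  simp only [sum_range_succ, range_zero, sum_empty, h1, h2, h5, powersetCard_zero, sum_singleton,
    prod_empty, sum_const, card_univ, nsmul_eq_mul, mul_one]
  linarith [h3.2, h4.1]

end ProductsOverFinsets

section ProductsOfPotents

variable [DecidableEq F]

theorem sum_quadraticChar_mul_comp_add_div_eq_zero {k : F} (hk : χ k = -1) (φ : F → ℤ) :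
    ∑ x, χ x * φ (x + k / x) = 0 := by
  have hk0 : k ≠ 0 := by rintro rfl; simp at hk
  suffices h : ∑ x, χ x * φ (x + k / x) = -∑ x, χ x * φ (x + k / x) by linarith
  conv_lhs => rw [← sum_comp_mul _ hk0, ← sum_comp_inv]
  rw [← sum_neg_distrib]
  refine sum_congr rfl fun x _ => ?_
  rcases eq_or_ne x 0 with rfl | hx
  · simp
  have hswap : k * x⁻¹ + k / (k * x⁻¹) = x + k / x := by field_simp; ring
  rw [hswap, map_mul, hk, ← quadraticChar_mul_sq x⁻¹ hx, pow_two, inv_mul_cancel_left₀ hx,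
    neg_one_mul, neg_mul]

theorem abs_sum_quadraticChar_sq_sub_mul_add_le (hF : ringChar F ≠ 2) {j : F} (hj : j ≠ 0) :
    |∑ s, χ (s ^ 2 - 2 * j ^ 2) * χ (s + 2 * j)| ≤ hasseBound (Fintype.card F) := by
  have hd : (Cubic.mk 1 (2 * j) (-2 * j ^ 2) (-4 * j ^ 3)).discr ≠ 0 := by
    convert! mul_ne_zero (pow_ne_zero 5 (Ring.two_ne_zero hF)) (pow_ne_zero 6 hj) using 1
    unfold Cubic.discr; ring
  convert abs_sum_quadraticChar_monicCubic_le hF hd using 3 with s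
  rw [← map_mul]
  congr 1; ring

/-- With `s = x + I / x` one has `x⁵ - x = x³ (s² - 2 I)`. -/
theorem abs_sum_quadraticChar_quintic_le (hF : ringChar F ≠ 2) {I : F} (hI : I ^ 2 = -1) :
    |∑ x, χ (x ^ 5 - x)| ≤ 2 * hasseBound (Fintype.card F) := by
  have hquintic (x : F) : χ (x ^ 5 - x) = χ x * χ ((x + I / x) ^ 2 - 2 * I) := by
    rcases eq_or_ne x 0 with rfl | hx
    · simp
    rw [← map_mul, ← quadraticChar_mul_sq (x * ((x + I / x) ^ 2 - 2 * I)) hx]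
    congr 1
    field_simp
    linear_combination -hI
  simp only [hquintic]
  have hI0 : I ≠ 0 := by rintro rfl; simp at hI
  by_cases hsq : IsSquare I
  · obtain ⟨j, rfl⟩ := hsq
    have hj : j ≠ 0 := left_ne_zero_of_mul hI0
    have hpos := abs_le.1 (abs_sum_quadraticChar_sq_sub_mul_add_le hF hj)
    have hneg := abs_le.1 (abs_sum_quadraticChar_sq_sub_mul_add_le hF (neg_ne_zero.2 hj))
    simp only [neg_sq, mul_neg, ← sub_eq_add_neg] at hneg
    rw [← pow_two, sum_quadraticChar_mul_comp_add_div hF hj fun s => χ (s ^ 2 - 2 * j ^ 2)]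
    simp only [mul_add, sum_add_distrib]
    rw [abs_le]
    constructor <;> linarith
  · rw [sum_quadraticChar_mul_comp_add_div_eq_zero (quadraticChar_neg_one_iff_not_isSquare.2 hsq)
      fun s => χ (s ^ 2 - 2 * I), abs_zero]
    exact mul_nonneg zero_le_two (hasseBound_nonneg _)

theorem sum_quadraticChar_comp_eq_zero_of_odd (hneg : χ (-1) = -1) {f : F → F}
    (hf : ∀ x, f (-x) = -f x) : ∑ x, χ (f x) = 0 := by
  suffices h : ∑ x, χ (f x) = -∑ x, χ (f x) by linarith
  conv_lhs => rw [← Equiv.sum_comp (Equiv.neg F)]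
  rw [← sum_neg_distrib]
  refine sum_congr rfl fun x _ => ?_
  rw [Equiv.neg_apply, hf, ← neg_one_mul, map_mul, hneg, neg_one_mul]

theorem quadraticChar_eq_one_of_potent (hF : ringChar F ≠ 2) {b : F} (hb : b ≠ 0)
    (h : b ^ (Fintype.card F / 2 + 1) = b) : χ b = 1 := by
  rw [quadraticChar_eq_pow_of_char_ne_two hF hb, if_pos]
  exact mul_right_cancel₀ hb (by rw [← pow_succ, h, one_mul])

variable {m : ℕ}

theorem PotentsCover.prod_one_sub_eq_zero (hF : ringChar F ≠ 2) (hm : Odd m)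
    (h : PotentsCover F m (Fintype.card F / 2 + 1)) {x : F} (hx : x ∉ potents F m \ {0, 1}) :
    ∏ c ∈ potents F m, (1 - χ (x - c)) = 0 := by
  suffices hc : ∃ c ∈ potents F m, χ (x - c) = 1 by
    obtain ⟨c, hc, hχ⟩ := hc
    exact prod_eq_zero hc (by rw [hχ, sub_self])
  by_cases hx01 : x = 0 ∨ x = 1
  · rcases hx01 with rfl | rfl
    · exact ⟨-1, mem_potents.2 hm.neg_one_pow, by simp⟩
    · exact ⟨0, zero_mem_potents hm.pos.ne', by simp⟩
  · obtain ⟨a, b, ha, hb, rfl⟩ := h x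
    rw [← mem_potents] at ha
    have hb0 : b ≠ 0 := by
      rintro rfl
      rw [add_zero] at hx hx01
      exact hx (by simpa [ha] using hx01)
    exact ⟨a, ha, by rw [add_sub_cancel_left]; exact quadraticChar_eq_one_of_potent hF hb0 hb⟩

theorem prod_one_sub_quadraticChar_le {t : Finset F} {x : F} (hx : x ∈ t) :
    ∏ c ∈ t, (1 - χ (x - c)) ≤ 2 ^ (#t - 1) := by
  rw [← mul_prod_erase _ _ hx, sub_self, quadraticChar_zero, sub_zero, one_mul,
    ← card_erase_of_mem hx]
  refine (prod_le_prod (fun c _ => ?_) fun c _ => ?_).trans_eq (prod_const 2)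
  all_goals linarith [abs_le.1 (abs_quadraticChar_le_one (x - c))]

theorem PotentsCover.sum_prod_one_sub_le (hF : ringChar F ≠ 2) (hm : Odd m)
    (h : PotentsCover F m (Fintype.card F / 2 + 1)) :
    ∑ x, ∏ c ∈ potents F m, (1 - χ (x - c)) ≤
      ((#(potents F m) - 2 : ℕ) : ℤ) * 2 ^ (#(potents F m) - 1) := by
  have hsub : {0, 1} ⊆ potents F m := by
    simp [insert_subset_iff, zero_mem_potents hm.pos.ne', one_mem_potents]
  rw [← sum_subset (subset_univ (potents F m \ {0, 1})) fun x _ => h.prod_one_sub_eq_zero hF hm,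
    ← card_pair (zero_ne_one (α := F)), ← card_sdiff_of_subset hsub, ← nsmul_eq_mul]
  exact sum_le_card_nsmul _ _ _ fun x hx => prod_one_sub_quadraticChar_le (mem_sdiff.1 hx).1

end ProductsOfPotents

theorem PotentsCover.card_le_of_half_of_isSquare (hF : ringChar F ≠ 2) (hI : IsSquare (-1 : F))
    (h : PotentsCover F 5 (Fintype.card F / 2 + 1)) : Fintype.card F ≤ 1270 := by
  classical
  obtain ⟨I, hI⟩ := hI
  replace hI : I ^ 2 = -1 := by rw [pow_two, hI]
  have hcard := card_potents_five (Ring.two_ne_zero hF) hI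
  have hprod (x : F) : ∏ c ∈ potents F 5, χ (x - c) = χ (x ^ 5 - x) := by
    rw [← map_prod, prod_sub_potents (by norm_num) hcard]
  have hlower := le_sum_prod_one_sub_of_card_five hF hcard
  have hupper := h.sum_prod_one_sub_le hF (by decide)
  have hquintic := (abs_le.1 (abs_sum_quadraticChar_quintic_le hF hI)).2
  have hsq := hasseBound_sq_le (Fintype.card F)
  simp only [hprod] at hlower
  rw [hcard] at hupper
  simp only [Nat.reduceSub, Nat.cast_ofNat, Int.reducePow, Int.reduceMul] at hupper
  have hL : hasseBound (Fintype.card F) ≤ 71 := by nlinarith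
  zify
  linarith

theorem PotentsCover.card_le_of_half_of_not_isSquare (hF : ringChar F ≠ 2)
    (hI : ¬IsSquare (-1 : F)) (h : PotentsCover F 3 (Fintype.card F / 2 + 1)) :
    Fintype.card F ≤ 7 := by
  classical
  have hcard := card_potents_three (Ring.two_ne_zero hF)
  have hprod (x : F) : ∏ c ∈ potents F 3, χ (x - c) = χ (x ^ 3 - x) := by
    rw [← map_prod, prod_sub_potents (by norm_num) hcard]
  have hodd := sum_quadraticChar_comp_eq_zero_of_odd
    (quadraticChar_neg_one_iff_not_isSquare.2 hI) (f := fun x => x ^ 3 - x) fun x => by ring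
  have hsum := sum_prod_one_sub_of_card_three hF hcard
  have hupper := h.sum_prod_one_sub_le hF (by decide)
  simp only [hprod, hodd] at hsum
  rw [hsum, hcard] at hupper
  simp only [Nat.reduceSub, Nat.cast_one, Int.reducePow, Int.reduceMul] at hupper
  zify
  linarith

end QuadraticSieve

section PowerResidues

open Finset Polynomial

variable {F : Type*} [Field F] [Fintype F] {d m : ℕ}

theorem exists_isPrimitiveRoot_card_sub_one (F : Type*) [Field F] [Fintype F] :
    ∃ ζ : F, IsPrimitiveRoot ζ (Fintype.card F - 1) := by
  obtain ⟨g, hg⟩ := IsCyclic.exists_ofOrder_eq_natCard (α := Fˣ)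
  refine ⟨g, IsPrimitiveRoot.coe_units_iff.2 ?_⟩
  classical rw [← Fintype.card_units, ← Nat.card_eq_fintype_card, ← hg]
  exact IsPrimitiveRoot.orderOf g

theorem exists_pow_eq_of_pow_eq_one (hdm : d * m = Fintype.card F - 1) {w : F} (hw : w ^ m = 1) :
    ∃ u, u ^ d = w := by
  obtain ⟨ζ, hζ⟩ := exists_isPrimitiveRoot_card_sub_one F
  have hpos : 0 < d * m := by have := Fintype.one_lt_card (α := F); omega
  rw [← hdm] at hζ
  have : NeZero (d * m) := ⟨hpos.ne'⟩
  obtain ⟨i, -, rfl⟩ := hζ.eq_pow_of_pow_eq_one (ξ := w) (by rw [mul_comm, pow_mul, hw, one_pow])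
  rw [← pow_mul, hζ.pow_eq_one_iff_dvd] at hw
  obtain ⟨k, rfl⟩ := Nat.dvd_of_mul_dvd_mul_right (pos_of_mul_pos_right hpos d.zero_le) hw
  exact ⟨ζ ^ k, by rw [← pow_mul, mul_comm]⟩

theorem card_pow_eq [DecidableEq F] (hdm : d * m = Fintype.card F - 1) {w : F} (hw : w ≠ 0) :
    #{u : F | u ^ d = w} = if w ^ m = 1 then d else 0 := by
  have hpos : 0 < d * m := by have := Fintype.one_lt_card (α := F); omega
  have hd : 0 < d := pos_of_mul_pos_left hpos m.zero_le
  split_ifs with hwm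
  · obtain ⟨ζ, hζ⟩ := exists_isPrimitiveRoot_card_sub_one F
    have hζd := hζ.pow (hdm ▸ hpos) (hdm.symm.trans (mul_comm d m))
    have hroots : ({u : F | u ^ d = w} : Finset F) = (nthRoots d w).toFinset := by
      ext u; simp [mem_nthRoots hd]
    rw [hroots, Multiset.toFinset_card_of_nodup (hζd.nthRoots_nodup hw), hζd.card_nthRoots,
      if_pos (exists_pow_eq_of_pow_eq_one hdm hwm)]
  · refine card_eq_zero.2 (filter_eq_empty_iff.2 fun u _ hu => hwm ?_)
    rw [← hu, ← pow_mul, hdm]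
    exact FiniteField.pow_card_sub_one_eq_one u (by rintro rfl; exact hw (by simp [← hu, hd.ne']))

end PowerResidues

section CubicSums

open Finset

variable {F : Type*} [Field F] [Fintype F] [DecidableEq F]

/-- The sum `ψ w + ψ² w` of the two nontrivial cubic characters of a finite field `F`, whose order
is supposed to be `1` modulo `3`: it is `2` on nonzero cubes and `-1` on the other units. -/
def cubicTrace (w : F) : ℤ := if w = 0 then 0 else if w ^ (Fintype.card F / 3) = 1 then 2 else -1

local notation "χ" => quadraticChar F
local notation "ρ" => cubicTrace (F := F)
local notation "L" => hasseBound (Fintype.card F)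

theorem cubicTrace_zero : ρ 0 = 0 := if_pos rfl

theorem cubicTrace_of_ne_zero {w : F} (hw : w ≠ 0) :
    ρ w = if w ^ (Fintype.card F / 3) = 1 then 2 else -1 := if_neg hw

theorem cubicTrace_one : ρ 1 = 2 := by rw [cubicTrace_of_ne_zero one_ne_zero, one_pow, if_pos rfl]

theorem cubicTrace_dichotomy {w : F} (hw : w ≠ 0) : ρ w = 2 ∨ ρ w = -1 := by
  rw [cubicTrace_of_ne_zero hw]
  exact ite_eq_or_eq _ _ _

theorem cubicTrace_eq_two_of_potent {b : F} (hb : b ≠ 0) (h : b ^ (Fintype.card F / 3 + 1) = b) :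
    ρ b = 2 := by
  rw [cubicTrace_of_ne_zero hb, if_pos (mul_right_cancel₀ hb (by rw [← pow_succ, h, one_mul]))]

omit [Fintype F] [DecidableEq F] in
theorem eq_or_mul_eq_one_of_pow_three_eq_one {a b : F} (ha : a ^ 3 = 1) (hb : b ^ 3 = 1)
    (ha1 : a ≠ 1) (hb1 : b ≠ 1) : a = b ∨ a * b = 1 := by
  have hquad {z : F} (hz : z ^ 3 = 1) (hz1 : z ≠ 1) : z ^ 2 + z + 1 = 0 :=
    (mul_eq_zero.1 (by linear_combination hz : (z - 1) * (z ^ 2 + z + 1) = 0)).resolve_left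
      (sub_ne_zero.2 hz1)
  have hfactor : (a - b) * (a * b - 1) = 0 := by
    linear_combination b * hquad ha ha1 - a * hquad hb hb1
  simpa [sub_eq_zero] using hfactor

omit [Fintype F] in
theorem ite_mul_ite_of_pow_three_eq_one {a b : F} (ha : a ^ 3 = 1) (hb : b ^ 3 = 1) :
    (if a = 1 then 2 else -1) * (if b = 1 then 2 else -1 : ℤ) =
      (if a * b = 1 then 2 else -1) + if a * b ^ 2 = 1 then 2 else -1 := by
  by_cases ha1 : a = 1
  · have hsq : b ^ 2 = 1 ↔ b = 1 :=
      ⟨fun h => by linear_combination hb - b * h, fun h => by rw [h, one_pow]⟩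
    simp only [ha1, one_mul, hsq, if_true]
    ring
  by_cases hb1 : b = 1
  · simp [hb1, ha1]
  rcases eq_or_mul_eq_one_of_pow_three_eq_one ha hb ha1 hb1 with rfl | hab
  · have hsq : a * a ≠ 1 := fun h => ha1 (by linear_combination ha - a * h)
    have hcube : a * a ^ 2 = 1 := by linear_combination ha
    simp [ha1, hsq, hcube]
  · have hsq : a * b ^ 2 = b := by linear_combination b * hab
    simp [ha1, hb1, hab, hsq]

omit [DecidableEq F] in
theorem three_ne_zero_of_card_mod (h3 : Fintype.card F % 3 = 1) : (3 : F) ≠ 0 := by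
  intro h
  have hcard : Fintype.card F = 3 * (Fintype.card F / 3) + 1 := by omega
  have hcast := FiniteField.cast_card_eq_zero F
  rw [hcard] at hcast
  push_cast at hcast
  simp [h] at hcast

section Rules

variable (h3 : Fintype.card F % 3 = 1)
include h3

omit [DecidableEq F] in
theorem pow_card_div_three_pow_three {w : F} (hw : w ≠ 0) :
    (w ^ (Fintype.card F / 3)) ^ 3 = 1 := by
  rw [← pow_mul, ← FiniteField.pow_card_sub_one_eq_one w hw]
  congr 1
  omega

theorem cubicTrace_mul_cube (x : F) {y : F} (hy : y ≠ 0) : ρ (x * y ^ 3) = ρ x := by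
  unfold cubicTrace
  rw [mul_pow, pow_right_comm, pow_card_div_three_pow_three h3 hy]
  simp [hy]

theorem cubicTrace_mul (u v : F) : ρ u * ρ v = ρ (u * v) + ρ (u * v ^ 2) := by
  by_cases hu : u = 0
  · simp [hu, cubicTrace_zero]
  by_cases hv : v = 0
  · simp [hv, cubicTrace_zero]
  rw [cubicTrace_of_ne_zero hu, cubicTrace_of_ne_zero hv, cubicTrace_of_ne_zero (mul_ne_zero hu hv),
    cubicTrace_of_ne_zero (mul_ne_zero hu (pow_ne_zero 2 hv)), mul_pow, mul_pow, pow_right_comm v]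
  exact ite_mul_ite_of_pow_three_eq_one (pow_card_div_three_pow_three h3 hu)
    (pow_card_div_three_pow_three h3 hv)

theorem cubicTrace_sq (x : F) : ρ (x ^ 2) = ρ x := by
  have h := cubicTrace_mul h3 1 x
  rw [cubicTrace_one, one_mul, one_mul] at h
  linarith

theorem cubicTrace_mul_mul (u v w : F) :
    ρ u * ρ v * ρ w =
      ρ (u * v * w) + ρ (u * v * w ^ 2) + ρ (u * w * v ^ 2) + ρ (v * w * u ^ 2) := by
  have hsq : ρ (u * v ^ 2 * w ^ 2) = ρ (v * w * u ^ 2) := by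
    by_cases hv : v = 0
    · simp [hv]
    by_cases hw : w = 0
    · simp [hw]
    rw [← cubicTrace_sq h3 (_ * w ^ 2),
      ← cubicTrace_mul_cube h3 (v * w * u ^ 2) (mul_ne_zero hv hw)]
    congr 1; ring
  rw [cubicTrace_mul h3, add_mul, cubicTrace_mul h3, cubicTrace_mul h3, hsq,
    mul_right_comm u (v ^ 2)]
  ring

theorem card_cube_roots (w : F) : (#{u : F | u ^ 3 = w} : ℤ) = 1 + ρ w := by
  rcases eq_or_ne w 0 with rfl | hw
  · rw [cubicTrace_zero]
    simp [filter_eq']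
  · rw [card_pow_eq (m := Fintype.card F / 3) (by omega) hw, cubicTrace_of_ne_zero hw]
    split_ifs <;> rfl

theorem sum_cubicTrace_mul (φ : F → ℤ) : ∑ w, ρ w * φ w = ∑ u, φ (u ^ 3) - ∑ w, φ w := by
  rw [sum_comp_eq_sum_mul_card univ (fun u => u ^ 3) φ, ← sum_sub_distrib]
  refine sum_congr rfl fun w _ => ?_
  rw [card_cube_roots h3]
  ring

theorem sum_cubicTrace : ∑ w, ρ w = 0 := by
  simpa using sum_cubicTrace_mul (F := F) h3 fun _ => 1

theorem sum_cubicTrace_linear {k : F} (hk : k ≠ 0) (c : F) : ∑ x, ρ (k * x + c) = 0 := by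
  rw [sum_comp_mul (fun x => ρ (x + c)) hk, ← sum_cubicTrace h3, ← sum_comp_sub ρ (-c)]
  simp only [sub_neg_eq_add]

theorem sum_cubicTrace_sub_mul_sub_sq {a b : F} (hab : a ≠ b) :
    ∑ x, ρ ((x - a) * (x - b) ^ 2) = -2 := by
  have hlin := sum_cubicTrace_linear h3 (sub_ne_zero.2 hab) 1
  rw [← add_sum_erase _ _ (mem_univ (0 : F)), mul_zero, zero_add, cubicTrace_one] at hlin
  have hsubst : ∑ v ∈ univ.erase 0, ρ ((a + v⁻¹ - a) * (a + v⁻¹ - b) ^ 2) =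
      ∑ v ∈ univ.erase 0, ρ ((a - b) * v + 1) := by
    refine sum_congr rfl fun v hv => ?_
    have hv : v ≠ 0 := ne_of_mem_erase hv
    rw [← cubicTrace_mul_cube h3 _ hv, ← cubicTrace_sq h3 ((a - b) * v + 1)]
    congr 1
    field_simp
    ring
  rw [sum_eq_add_sum_erase_add_inv _ a, hsubst, sub_self, zero_mul, cubicTrace_zero]
  linarith

end Rules

section Bounds

variable (hF : ringChar F ≠ 2)
include hF

/-- The number of solutions of `k (x - a) (x - b) = y` is a value of `χ`, linear in `y`; summing
over the cubes `y` gives a cubic. -/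
theorem abs_sum_cubicTrace_quadratic_le (h3 : Fintype.card F % 3 = 1) {k a b : F} (hk : k ≠ 0)
    (hab : a ≠ b) : |∑ x, ρ (k * ((x - a) * (x - b)))| ≤ L := by
  have h4 : (4 : F) ≠ 0 := by
    rw [show (4 : F) = 2 ^ 2 by norm_num]
    exact pow_ne_zero 2 (Ring.two_ne_zero hF)
  have hcount (y : F) : (#{x | k * ((x - a) * (x - b)) = y} : ℤ) =
      1 + χ (4 / k * y + (a - b) ^ 2) := by
    rw [show 4 / k * y + (a - b) ^ 2 = (a + b) ^ 2 - 4 * (a * b - y / k) by ring,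
      ← card_roots_quadratic hF]
    congr 2
    ext x
    simp only [mem_filter, mem_univ, true_and]
    constructor
    · rintro rfl; field_simp; ring
    · intro h; field_simp at h; linear_combination h
  have hd : (Cubic.mk (4 / k) 0 0 ((a - b) ^ 2)).discr ≠ 0 := by
    have : (27 : F) * (4 / k) ^ 2 * ((a - b) ^ 2) ^ 2 ≠ 0 := by
      rw [show (27 : F) = 3 ^ 3 by norm_num]
      simp [h4, three_ne_zero_of_card_mod h3, hk, sub_ne_zero.2 hab]
    convert! neg_ne_zero.2 this using 1
    simp only [Cubic.discr]; ring
  have hcubes := sum_cubicTrace_mul h3 fun w => χ (4 / k * w + (a - b) ^ 2)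
  rw [sum_quadraticChar_linear hF (div_ne_zero h4 hk), sub_zero] at hcubes
  rw [sum_comp_eq_sum_mul_card univ (fun x => k * ((x - a) * (x - b)))]
  simp only [hcount, mul_add, mul_one, sum_add_distrib, sum_cubicTrace h3, zero_add, hcubes]
  convert abs_sum_quadraticChar_cubic_le hF (div_ne_zero h4 hk) hd using 3 with u
  simp only [zero_mul, add_zero]

theorem abs_sum_cubicTrace_sub_mul_sub_mul_sub_le (h3 : Fintype.card F % 3 = 1) {a b c : F}
    (hab : a ≠ b) (hac : a ≠ c) (hbc : b ≠ c) :
    |∑ x, ρ ((x - a) * (x - b) * (x - c))| ≤ L + 2 := by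
  have hb := sub_ne_zero.2 hab
  have hc := sub_ne_zero.2 hac
  have hquad := abs_sum_cubicTrace_quadratic_le hF h3 (mul_ne_zero hb hc) (a := -(a - b)⁻¹)
    (b := -(a - c)⁻¹) fun h => hbc (by linear_combination - inv_injective (neg_injective h))
  have hsubst : ∑ v ∈ univ.erase 0, ρ ((a + v⁻¹ - a) * (a + v⁻¹ - b) * (a + v⁻¹ - c)) =
      ∑ v ∈ univ.erase 0, ρ ((a - b) * (a - c) * ((v - -(a - b)⁻¹) * (v - -(a - c)⁻¹))) := by
    refine sum_congr rfl fun v hv => ?_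
    have hv : v ≠ 0 := ne_of_mem_erase hv
    rw [← cubicTrace_mul_cube h3 _ hv]
    congr 1
    field_simp
    ring
  have hzero : (a - b) * (a - c) * ((0 - -(a - b)⁻¹) * (0 - -(a - c)⁻¹)) = 1 := by
    field_simp; ring
  rw [← add_sum_erase _ _ (mem_univ (0 : F)), hzero, cubicTrace_one, abs_le] at hquad
  rw [sum_eq_add_sum_erase_add_inv _ a, hsubst, sub_self, zero_mul, zero_mul, cubicTrace_zero,
    abs_le]
  constructor <;> linarith

omit hF in
/-- With `s = u + 1 / u` one has `u⁶ + A u³ + 1 = u³ (s³ - 3 s + A)`. -/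
theorem sum_quadraticChar_sextic (A : F) :
    ∑ u, χ (u ^ 6 + A * u ^ 3 + 1) =
      1 + ∑ x, χ x * χ ((x + 1 ^ 2 / x) ^ 3 - 3 * (x + 1 ^ 2 / x) + A) := by
  rw [← add_sum_erase _ _ (mem_univ (0 : F)),
    ← add_sum_erase _ (fun x => χ x * χ ((x + 1 ^ 2 / x) ^ 3 - 3 * (x + 1 ^ 2 / x) + A))
      (mem_univ (0 : F)), quadraticChar_zero, zero_mul, zero_add]
  congr 1
  · simp
  · refine sum_congr rfl fun x hx => ?_
    have hx : x ≠ 0 := ne_of_mem_erase hx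
    rw [← map_mul, ← quadraticChar_mul_sq (x * _) hx]
    congr 1
    field_simp
    ring

theorem abs_sum_quadraticChar_sextic_le (h3 : (3 : F) ≠ 0) {A : F} (hA : A ^ 2 ≠ 4) :
    |∑ u, χ (u ^ 6 + A * u ^ 3 + 1)| ≤ 2 * L + 3 := by
  have hd : (Cubic.mk 1 0 (-3) A).discr ≠ 0 := by
    convert! mul_ne_zero (pow_ne_zero 3 h3) (sub_ne_zero.2 hA.symm) using 1
    simp only [Cubic.discr]; ring
  have hquartic (s : F) (hs : s ^ 2 = 4) :
      |∑ x, χ (x ^ 3 - 3 * x + A) * χ (x - s)| ≤ L + 1 := by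
    have hroot : 1 * s ^ 3 + 0 * s ^ 2 + -3 * s + A ≠ 0 := fun h => hA <| by
      linear_combination (A - s ^ 3 + 3 * s) * h + (s ^ 2 - 1) ^ 2 * hs
    convert abs_sum_quadraticChar_sub_mul_cubic_le hF hd hroot using 3 with x
    rw [← map_mul]
    congr 1; ring
  have hpos := abs_le.1 (hquartic 2 (by norm_num))
  have hneg := abs_le.1 (hquartic (-2) (by norm_num))
  simp only [sub_neg_eq_add] at hneg
  rw [sum_quadraticChar_sextic,
    sum_quadraticChar_mul_comp_add_div hF one_ne_zero fun s => χ (s ^ 3 - 3 * s + A), abs_le]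
  simp only [mul_one, mul_add, sum_add_distrib]
  constructor <;> linarith

theorem sum_quadraticChar_monicQuadratic {b c : F} (hbc : b ^ 2 ≠ 4 * c) :
    ∑ w, χ (w ^ 2 + b * w + c) = -1 := by
  have h2 : (2 : F) ≠ 0 := Ring.two_ne_zero hF
  have h4 : (4 : F) = 2 ^ 2 := by norm_num
  have hD : 0 ≠ (b ^ 2 - 4 * c) / 4 :=
    (div_ne_zero (sub_ne_zero.2 hbc) (h4 ▸ pow_ne_zero 2 h2)).symm
  have hcount (y : F) : (#{x | x ^ 2 = y} : ℤ) = 1 + χ y := by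
    have h := card_roots_quadratic hF 0 (-y)
    rw [show (0 : F) ^ 2 - 4 * -y = y * 2 ^ 2 by ring, quadraticChar_mul_sq _ h2] at h
    simpa [add_neg_eq_zero] using h
  have hsq := sum_comp_eq_sum_mul_card univ (· ^ 2) fun y : F => χ (y - (b ^ 2 - 4 * c) / 4)
  simp only [hcount, mul_add, mul_one, sum_add_distrib, sum_comp_sub χ, quadraticChar_sum_zero hF,
    zero_add] at hsq
  rw [← sum_comp_sub _ (b / 2), ← sum_quadraticChar_sub_mul_sub hF hD]
  simp only [map_mul, sub_zero, mul_comm (χ _) (χ (_ - _))]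
  rw [← hsq]
  refine sum_congr rfl fun x _ => ?_
  congr 1
  rw [h4]
  field_simp
  ring

theorem abs_sum_cubicTrace_mul_quadraticChar_le (h3 : Fintype.card F % 3 = 1) {A : F}
    (hA : A ^ 2 ≠ 4) : |∑ w, ρ w * χ (w ^ 2 + A * w + 1)| ≤ 2 * L + 4 := by
  have hsextic := abs_le.1 <|
    abs_sum_quadraticChar_sextic_le hF (three_ne_zero_of_card_mod h3) hA
  have hcubes := sum_cubicTrace_mul h3 fun w => χ (w ^ 2 + A * w + 1)
  simp only [← pow_mul, Nat.reduceMul] at hcubes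
  rw [hcubes, sum_quadraticChar_monicQuadratic hF (by rwa [mul_one]), abs_le]
  constructor <;> linarith

omit hF in
/-- The substitution `w ↦ w⁻¹` preserves the quadratic character and squares the argument of
`ρ`, so that twisting by `k` multiplies the sum by `ρ k / 2`. -/
theorem cubicTrace_mul_sum_mul_quadraticChar (h3 : Fintype.card F % 3 = 1) (A k : F) :
    ρ k * ∑ w, ρ w * χ (w ^ 2 + A * w + 1) = 2 * ∑ w, ρ (k * w) * χ (w ^ 2 + A * w + 1) := by
  have hinv : ∑ w, ρ (k * w ^ 2) * χ (w ^ 2 + A * w + 1) =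
      ∑ w, ρ (k * w) * χ (w ^ 2 + A * w + 1) := by
    rw [← sum_comp_inv]
    refine sum_congr rfl fun w _ => ?_
    by_cases hw : w = 0
    · simp [hw, cubicTrace_zero]
    congr 1
    · rw [← cubicTrace_mul_cube h3 _ hw]
      congr 1
      field_simp
    · rw [← quadraticChar_mul_sq _ hw]
      congr 1
      field_simp
      ring
  simp only [mul_sum, ← mul_assoc, cubicTrace_mul h3, add_mul, sum_add_distrib]
  rw [hinv, ← sum_add_distrib]
  simp only [two_mul, add_mul]

theorem abs_sum_cubicTrace_const_mul_mul_quadraticChar_le (h3 : Fintype.card F % 3 = 1) {A k : F}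
    (hk : k ≠ 0) (hA : A ^ 2 ≠ 4) :
    |∑ w, ρ (k * w) * χ (w ^ 2 + A * w + 1)| ≤ 2 * L + 4 := by
  have h := abs_le.1 (abs_sum_cubicTrace_mul_quadraticChar_le hF h3 hA)
  have htwist := cubicTrace_mul_sum_mul_quadraticChar h3 A k
  rw [abs_le]
  rcases cubicTrace_dichotomy hk with hk | hk <;> rw [hk] at htwist <;> constructor <;> linarith

theorem card_sub_mul_sub_div_eq {s t : F} (hst : s * t ≠ 0) (w : F) :
    (#{y ∈ univ.erase 0 | (y - s) * (y - t) / y = w} : ℤ) =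
      1 + χ ((s + t + w) ^ 2 - 4 * (s * t)) := by
  rw [← card_roots_quadratic hF]
  congr 2
  ext y
  simp only [mem_filter, mem_erase, mem_univ, and_true, true_and]
  constructor
  · rintro ⟨hy, rfl⟩
    field_simp
    ring
  · intro h
    have hy : y ≠ 0 := by rintro rfl; exact hst (by linear_combination h)
    refine ⟨hy, ?_⟩
    field_simp
    linear_combination h

theorem sum_cubicTrace_sub_mul_sub_div (h3 : Fintype.card F % 3 = 1) {k s t : F} (hk : k ≠ 0)
    (hst : s * t ≠ 0) :
    ∑ y ∈ univ.erase 0, ρ (k * ((y - s) * (y - t) / y)) =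
      ∑ w, ρ (k * w) * χ ((s + t + w) ^ 2 - 4 * (s * t)) := by
  have hlin := sum_cubicTrace_linear h3 hk 0
  simp only [add_zero] at hlin
  rw [sum_comp_eq_sum_mul_card _ (fun y => (y - s) * (y - t) / y) fun w => ρ (k * w)]
  simp only [card_sub_mul_sub_div_eq hF hst, mul_add, mul_one, sum_add_distrib, hlin, zero_add]

/-- The substitution `x = (a - b) y + c` moves `c` to `0` and makes the difference of the other two
points equal to `1`. -/
theorem abs_sum_cubicTrace_sub_mul_sub_mul_sub_sq_le (h3 : Fintype.card F % 3 = 1) {a b c : F}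
    (hab : a ≠ b) (hac : a ≠ c) (hbc : b ≠ c) :
    |∑ x, ρ ((x - a) * (x - b) * (x - c) ^ 2)| ≤ 2 * L + 4 := by
  have hk := sub_ne_zero.2 hab
  obtain ⟨s, hs⟩ : ∃ s, (a - b) * s = a - c := ⟨(a - c) / (a - b), mul_div_cancel₀ _ hk⟩
  obtain ⟨t, ht⟩ : ∃ t, (a - b) * t = b - c := ⟨(b - c) / (a - b), mul_div_cancel₀ _ hk⟩
  have hst1 : s - t = 1 := mul_left_cancel₀ hk (by linear_combination hs - ht)
  have hst : s * t ≠ 0 := mul_ne_zero (right_ne_zero_of_mul (hs ▸ sub_ne_zero.2 hac))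
    (right_ne_zero_of_mul (ht ▸ sub_ne_zero.2 hbc))
  have hA : (2 * (s + t)) ^ 2 ≠ 4 := fun h => by
    refine mul_ne_zero (pow_ne_zero 4 (Ring.two_ne_zero hF)) hst ?_
    linear_combination h - 4 * (s - t + 1) * hst1
  have hsubst : ∑ x, ρ ((x - a) * (x - b) * (x - c) ^ 2) =
      ∑ y ∈ univ.erase 0, ρ ((a - b) * ((y - s) * (y - t) / y)) := by
    have hzero : (a - b) * 0 - -c - c = 0 := by ring
    rw [← sum_comp_sub _ (-c), ← sum_comp_mul _ hk, ← add_sum_erase _ _ (mem_univ (0 : F)),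
      hzero, zero_pow two_ne_zero, mul_zero, cubicTrace_zero, zero_add]
    refine sum_congr rfl fun y hy => ?_
    have hy : y ≠ 0 := ne_of_mem_erase hy
    have ha : (a - b) * y - -c - a = (a - b) * (y - s) := by linear_combination hs
    have hb : (a - b) * y - -c - b = (a - b) * (y - t) := by linear_combination ht
    rw [ha, hb, ← cubicTrace_mul_cube h3 ((a - b) * _) (mul_ne_zero hk hy)]
    congr 1
    field_simp
    ring
  rw [hsubst, sum_cubicTrace_sub_mul_sub_div hF h3 hk hst]
  convert abs_sum_cubicTrace_const_mul_mul_quadraticChar_le hF h3 hk hA using 6 with w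
  linear_combination (s - t + 1) * hst1

theorem neg_le_sum_prod_cubicTrace_of_card_two (h3 : Fintype.card F % 3 = 1) {t : Finset F}
    (ht : #t = 2) : -(L + 2) ≤ ∑ x, ∏ c ∈ t, ρ (x - c) := by
  obtain ⟨a, b, hab, rfl⟩ := card_eq_two.1 ht
  have h := abs_sum_cubicTrace_quadratic_le hF h3 one_ne_zero hab
  simp only [one_mul] at h
  simp only [prod_pair hab, cubicTrace_mul h3, sum_add_distrib,
    sum_cubicTrace_sub_mul_sub_sq h3 hab]
  linarith [(abs_le.1 h).1]

theorem sum_prod_cubicTrace_le_of_card_three (h3 : Fintype.card F % 3 = 1) {t : Finset F}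
    (ht : #t = 3) : ∑ x, ∏ c ∈ t, ρ (x - c) ≤ 7 * L + 14 := by
  obtain ⟨a, b, c, hab, hac, hbc, rfl⟩ := card_eq_three.1 ht
  have habc := abs_sum_cubicTrace_sub_mul_sub_mul_sub_le hF h3 hab hac hbc
  have hc := abs_sum_cubicTrace_sub_mul_sub_mul_sub_sq_le hF h3 hab hac hbc
  have hb := abs_sum_cubicTrace_sub_mul_sub_mul_sub_sq_le hF h3 hac hab hbc.symm
  have ha := abs_sum_cubicTrace_sub_mul_sub_mul_sub_sq_le hF h3 hbc hab.symm hac.symm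
  have hab' : a ∉ ({b, c} : Finset F) := by simp [hab, hac]
  simp only [prod_insert hab', prod_pair hbc, ← mul_assoc, cubicTrace_mul_mul h3, sum_add_distrib]
  linarith [(abs_le.1 habc).2, (abs_le.1 hc).2, (abs_le.1 hb).2, (abs_le.1 ha).2]

end Bounds

end CubicSums

section CubicSieve

open Finset

/-- A symmetric weight on five values of `cubicTrace`. If `N` of them are `2` and the others are
`-1`, the weight is `9 / 2 * (N - 1) * (N - 3) * (N - 4)`, which is negative only for `N = 0`. -/
def cubicSieve (s : Multiset ℤ) : ℤ := -4 + 4 * s.esymm 1 - 2 * s.esymm 2 + s.esymm 3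

theorem cubicSieve_nonneg {s : Multiset ℤ} (hcard : s.card = 5) (h2 : 2 ∈ s)
    (hs : ∀ r ∈ s, r = 0 ∨ r = 2 ∨ r = -1) (h0 : s.count 0 ≤ 1) : 0 ≤ cubicSieve s := by
  have hle : s ≤ .replicate 5 2 + .replicate 5 (-1) + {0} := by
    refine Multiset.le_iff_count.2 fun r => ?_
    by_cases hr : r ∈ s
    · have := hcard ▸ Multiset.count_le_card r s
      rcases hs r hr with rfl | rfl | rfl <;> simpa [Multiset.count_replicate]
    · simp [Multiset.count_eq_zero.2 hr]
  have hfinite : ∀ t ∈ Multiset.powersetCard 5 (.replicate 5 2 + .replicate 5 (-1) + {(0 : ℤ)}),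
      2 ∈ t → 0 ≤ cubicSieve t := by decide +kernel
  exact hfinite s (Multiset.mem_powersetCard.2 ⟨hle, hcard⟩) h2

variable {F : Type*} [Field F] [Fintype F]

local notation "L" => hasseBound (Fintype.card F)

theorem sum_cubicSieve_le [DecidableEq F] (hF : ringChar F ≠ 2) (h3 : Fintype.card F % 3 = 1)
    {t : Finset F} (ht : #t = 5) :
    ∑ x, cubicSieve (t.val.map fun c => cubicTrace (x - c)) ≤
      -4 * Fintype.card F + 90 * L + 180 := by
  have h1 : ∑ u ∈ powersetCard 1 t, ∑ x, ∏ c ∈ u, cubicTrace (x - c) = 0 := by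
    refine sum_eq_zero fun u hu => ?_
    obtain ⟨a, rfl⟩ := card_eq_one.1 (mem_powersetCard.1 hu).2
    simp only [prod_singleton]
    rw [sum_comp_sub cubicTrace, sum_cubicTrace h3]
  have h2 : (10 : ℕ) • -(L + 2) ≤ ∑ u ∈ powersetCard 2 t, ∑ x, ∏ c ∈ u, cubicTrace (x - c) := by
    rw [show 10 = #(powersetCard 2 t) by rw [card_powersetCard, ht]; rfl]
    exact card_nsmul_le_sum _ _ _ fun u hu =>
      neg_le_sum_prod_cubicTrace_of_card_two hF h3 (mem_powersetCard.1 hu).2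
  have h3 : ∑ u ∈ powersetCard 3 t, ∑ x, ∏ c ∈ u, cubicTrace (x - c) ≤ (10 : ℕ) • (7 * L + 14) := by
    rw [show 10 = #(powersetCard 3 t) by rw [card_powersetCard, ht]; rfl]
    exact sum_le_card_nsmul _ _ _ fun u hu =>
      sum_prod_cubicTrace_le_of_card_three hF h3 (mem_powersetCard.1 hu).2
  rw [sum_comm] at h1 h2 h3
  simp only [cubicSieve, esymm_map_val, sum_add_distrib, sum_sub_distrib, ← mul_sum, sum_const,
    card_univ, h1]
  simp only [nsmul_eq_mul] at h2 h3 ⊢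
  push_cast at h2 h3
  linarith

theorem PotentsCover.exists_cubicTrace_eq_two [DecidableEq F] {m : ℕ} (hm : Odd m)
    (h : PotentsCover F m (Fintype.card F / 3 + 1))
    (hsub : potents F m ⊆ potents F (Fintype.card F / 3 + 1)) (x : F) :
    ∃ c ∈ potents F m, cubicTrace (x - c) = 2 := by
  rcases eq_or_ne x 0 with rfl | hx0
  · exact ⟨-1, mem_potents.2 hm.neg_one_pow, by rw [zero_sub, neg_neg, cubicTrace_one]⟩
  by_cases hx : x ∈ potents F m
  · refine ⟨0, zero_mem_potents hm.pos.ne', ?_⟩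
    rw [sub_zero]
    exact cubicTrace_eq_two_of_potent hx0 (mem_potents.1 (hsub hx))
  · obtain ⟨a, b, ha, hb, rfl⟩ := h x
    rw [← mem_potents] at ha
    have hb0 : b ≠ 0 := by rintro rfl; exact hx (by rwa [add_zero])
    exact ⟨a, ha, by rw [add_sub_cancel_left]; exact cubicTrace_eq_two_of_potent hb0 hb⟩

theorem PotentsCover.card_le_of_third (hF : ringChar F ≠ 2) (h3 : Fintype.card F % 3 = 1)
    (hI : IsSquare (-1 : F)) (h : PotentsCover F 5 (Fintype.card F / 3 + 1)) :
    Fintype.card F ≤ 2092 := by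
  classical
  have h4 : 4 ∣ Fintype.card F / 3 := by
    have := FiniteField.isSquare_neg_one_iff.1 hI
    have := FiniteField.odd_card_of_char_ne_two hF
    omega
  obtain ⟨I, hI⟩ := hI
  have hcard := card_potents_five (Ring.two_ne_zero hF) (show I ^ 2 = -1 by rw [pow_two, hI])
  have hnonneg : 0 ≤ ∑ x, cubicSieve ((potents F 5).val.map fun c => cubicTrace (x - c)) := by
    refine sum_nonneg fun x _ => cubicSieve_nonneg (by rwa [Multiset.card_map]) ?_ ?_ ?_
    · have hsub := potents_subset_potents (F := F) h4
      exact Multiset.mem_map.2 (h.exists_cubicTrace_eq_two (by decide) hsub x)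
    · intro r hr
      obtain ⟨c, -, rfl⟩ := Multiset.mem_map.1 hr
      exact (eq_or_ne (x - c) 0).imp (fun h => by rw [h, cubicTrace_zero]) cubicTrace_dichotomy
    · have hzero (c : F) (hc : 0 = cubicTrace (x - c)) : x = c := by
        by_contra hne
        rcases cubicTrace_dichotomy (sub_ne_zero.2 hne) with h | h <;> omega
      rw [Multiset.count_map, ← filter_val, card_val]
      refine card_le_one.2 fun c hc d hd => ?_
      rw [← hzero c (mem_filter.1 hc).2, hzero d (mem_filter.1 hd).2]
  have hle := hnonneg.trans (sum_cubicSieve_le hF h3 hcard)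
  have hsq := hasseBound_sq_le (Fintype.card F)
  have hL : hasseBound (Fintype.card F) ≤ 91 := by nlinarith
  zify
  linarith

end CubicSieve

section FiniteFieldComputation

open Polynomial

/-- The list `v` stands for the element `v₀ + v₁ α + v₂ α² + ⋯` of the extension of `𝔽_p`
generated by an element `α` with `α ^ d = m₀ + m₁ α + ⋯ + m_{d-1} α ^ (d-1)`, which is given
by another list `m`. Prime fields are the case `m = [g]`, where `α = g`. -/
abbrev CoeffList : Type := List ℕ

namespace CoeffList

/-- The linear combination `u + c v` in `𝔽_p[α]`. -/
def addSmul (p c : ℕ) : CoeffList → CoeffList → CoeffList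
  | u, [] => u
  | [], b :: v => c * b % p :: addSmul p c [] v
  | a :: u, b :: v => (a + c * b) % p :: addSmul p c u v

/-- Subtraction in `𝔽_p[α]`. -/
def sub (p : ℕ) (u v : CoeffList) : CoeffList := addSmul p (p - 1) u v

/-- Multiplication by `α`, reducing the leading term with `m`. -/
def mulGen (p : ℕ) (m v : CoeffList) : CoeffList :=
  if v.length = m.length then addSmul p (v.getLast?.getD 0) (0 :: v.dropLast) m else 0 :: v

/-- Multiplication in `𝔽_p[α]`, by Horner's scheme. -/
def mul (p : ℕ) (m u v : CoeffList) : CoeffList :=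
  u.foldr (fun a w => addSmul p a (mulGen p m w) v) []

/-- The generator `α`. -/
def gen (p : ℕ) (m : CoeffList) : CoeffList := mulGen p m [1]

/-- Binary powering, for exponents `e ≤ fuel`. -/
def powAux (p : ℕ) (m v : CoeffList) : (fuel e : ℕ) → CoeffList
  | 0, _ => [1]
  | fuel + 1, e =>
    if e = 0 then [1]
    else if e % 2 = 1 then
      mul p m v (mul p m (powAux p m v fuel (e / 2)) (powAux p m v fuel (e / 2)))
    else mul p m (powAux p m v fuel (e / 2)) (powAux p m v fuel (e / 2))

/-- Powers in `𝔽_p[α]`. Elements of `𝔽_p` are raised to powers as natural numbers, which the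
kernel does much faster. -/
def pow (p : ℕ) (m : CoeffList) : CoeffList → ℕ → CoeffList
  | [a], e => [a ^ e % p]
  | v, e => powAux p m v e e

/-- All coefficients vanish. -/
def isZero (v : CoeffList) : Bool := v.all (· == 0)

/-- The power with exponent `p ^ d - 1` is `1`. This certifies that an element is nonzero
without assuming that the polynomial presented by `m` is irreducible. -/
def isNonzero (p : ℕ) (m v : CoeffList) : Bool :=
  isZero (sub p (pow p m v (p ^ m.length - 1)) [1])

/-- The element satisfies `v ^ n = v`. -/
def isPotent (p : ℕ) (m : CoeffList) (n : ℕ) (v : CoeffList) : Bool :=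
  isZero (sub p (pow p m v n) v)

/-- The generator satisfies `α ^ (p ^ d) = α`, that is, `X ^ d - ∑ mᵢ X ^ i` divides
`X ^ (p ^ d) - X` and hence splits over the field with `p ^ d` elements. -/
def splits (p : ℕ) (m : CoeffList) : Bool := isPotent p m (p ^ m.length) (gen p m)

/-- The generator is nonzero and its order is not a proper divisor of `p ^ d - 1`. -/
def isPrimitive (p : ℕ) (m : CoeffList) : Bool :=
  isNonzero p m (gen p m) && (List.range (p ^ m.length - 1)).all fun l =>
    (p ^ m.length - 1) % l != 0 || isNonzero p m (sub p (pow p m (gen p m) l) [1])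

/-- The power `i = α ^ ((p ^ d - 1) / 4)`, a square root of `-1` when `4 ∣ p ^ d - 1` and `α` is
not a square. -/
def sqrtNegOne (p : ℕ) (m : CoeffList) : CoeffList := pow p m (gen p m) ((p ^ m.length - 1) / 4)

/-- The elements `0, 1, -1, i, -i`, which are the `5`-potents if `i ^ 2 = -1`. -/
def fivePotents (p : ℕ) (m : CoeffList) : List CoeffList :=
  [[], [1], [p - 1], sqrtNegOne p m, sub p [] (sqrtNegOne p m)]

/-- A certificate that some element of the list `s` is not the sum of a `5`-potent and an
`n`-potent in the field with `p ^ d` elements. -/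
def refutesCover (p : ℕ) (m : CoeffList) (s : List CoeffList) (n : ℕ) : Bool :=
  splits p m && isZero (sub p (pow p m (sqrtNegOne p m) 2) [p - 1]) &&
    s.any fun γ => (fivePotents p m).all fun c =>
      isNonzero p m (sub p (pow p m (sub p γ c) n) (sub p γ c))

/-- A certificate that every element of the field with `p ^ d` elements is the sum of a
`5`-potent and an `n`-potent. -/
def verifiesCover (p : ℕ) (m : CoeffList) (n : ℕ) : Bool :=
  splits p m && isPrimitive p m &&
    (List.iterate (mulGen p m) [1] (p ^ m.length - 1)).all fun γ =>
      (fivePotents p m).any fun c => isPotent p m 5 c && isPotent p m n (sub p γ c)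

section Eval

variable {R : Type*} [CommRing R]

/-- The value of a list as a polynomial in `α`. -/
def eval (α : R) : CoeffList → R
  | [] => 0
  | a :: v => a + α * eval α v

theorem eval_append (α : R) (u v : CoeffList) :
    eval α (u ++ v) = eval α u + α ^ u.length * eval α v := by
  induction u with
  | nil => simp [eval]
  | cons a u ih => simp only [List.cons_append, eval, ih, List.length_cons]; ring

theorem eval_eq_zero_of_isZero (α : R) {v : CoeffList} (h : isZero v = true) : eval α v = 0 := by
  induction v with
  | nil => rfl
  | cons a v ih =>
    simp only [isZero, List.all_cons, Bool.and_eq_true, beq_iff_eq] at h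
    simp [eval, h.1, ih h.2]

theorem map_eval {S : Type*} [CommRing S] (φ : R →+* S) (α : R) (v : CoeffList) :
    φ (eval α v) = eval (φ α) v := by
  induction v with
  | nil => simp [eval]
  | cons a v ih => simp [eval, ih]

theorem degree_eval_X_lt [Nontrivial R] (v : CoeffList) :
    (eval (X : R[X]) v).degree < v.length := by
  induction v with
  | nil => simp [eval]
  | cons a v ih =>
    have hX : (X * eval X v : R[X]).degree < (v.length + 1 : ℕ) := by
      refine (degree_mul_le _ _).trans_lt ?_
      rw [Nat.cast_succ, add_comm (v.length : WithBot ℕ)]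
      exact WithBot.add_lt_add_of_le_of_lt (by simp) degree_X_le ih
    exact (degree_add_le _ _).trans_lt
      (max_lt ((degree_natCast_le _).trans_lt (by exact_mod_cast v.length.succ_pos)) hX)

variable {p : ℕ} [CharP R p]

theorem eval_addSmul (α : R) (c : ℕ) (u v : CoeffList) :
    eval α (addSmul p c u v) = eval α u + c * eval α v := by
  fun_induction addSmul p c u v with
  | case1 => simp [eval]
  | case2 b v ih => simp only [eval, ih, ← CharP.cast_eq_mod]; push_cast; ring
  | case3 a u b v ih => simp only [eval, ih, ← CharP.cast_eq_mod]; push_cast; ring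

theorem cast_sub_one (hp : p ≠ 0) : ((p - 1 : ℕ) : R) = -1 := by
  rw [Nat.cast_pred (Nat.pos_of_ne_zero hp), CharP.cast_eq_zero, zero_sub]

theorem eval_sub (hp : p ≠ 0) (α : R) (u v : CoeffList) :
    eval α (sub p u v) = eval α u - eval α v := by
  rw [sub, eval_addSmul, cast_sub_one hp]; ring

variable {α : R} {m : CoeffList} (hα : α ^ m.length = eval α m)
include hα

theorem eval_mulGen (v : CoeffList) : eval α (mulGen p m v) = α * eval α v := by
  rw [mulGen]
  split_ifs with h
  · rw [eval_addSmul, ← hα]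
    rcases List.eq_nil_or_concat v with rfl | ⟨u, a, rfl⟩
    · simp [eval]
    · simp only [List.concat_eq_append, List.dropLast_concat, List.getLast?_concat,
        Option.getD_some, eval_append, eval, ← h, List.length_append, List.length_singleton]
      push_cast
      ring
  · simp [eval]

theorem eval_iterate_mulGen (l : ℕ) : eval α ((mulGen p m)^[l] [1]) = α ^ l := by
  induction l with
  | zero => simp [eval]
  | succ l ih => rw [Function.iterate_succ_apply', eval_mulGen hα, ih, pow_succ']

theorem eval_mul (u v : CoeffList) : eval α (mul p m u v) = eval α u * eval α v := by
  induction u with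
  | nil => simp [mul, eval]
  | cons a u ih =>
    rw [mul, List.foldr_cons, ← mul, eval_addSmul, eval_mulGen hα, ih, eval]
    ring

theorem eval_powAux (v : CoeffList) {fuel e : ℕ} (he : e ≤ fuel) :
    eval α (powAux p m v fuel e) = eval α v ^ e := by
  fun_induction powAux p m v fuel e with
  | case1 e => simp [eval, Nat.le_zero.1 he]
  | case2 => simp [eval]
  | case3 fuel e _ hodd ih =>
    rw [eval_mul hα, eval_mul hα, ih (by omega), ← pow_add, ← pow_succ']
    congr 1; omega
  | case4 fuel e _ hodd ih =>
    rw [eval_mul hα, ih (by omega), ← pow_add]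
    congr 1; omega

theorem eval_pow (v : CoeffList) (e : ℕ) : eval α (pow p m v e) = eval α v ^ e := by
  fun_cases pow p m v e with
  | case1 a => simp [eval, ← CharP.cast_eq_mod]
  | case2 => exact eval_powAux hα v le_rfl

theorem eval_gen : eval α (gen p m) = α := by
  rw [gen, eval_mulGen hα]; simp [eval]

theorem eval_pow_eq_self_of_isPotent (hp : p ≠ 0) {n : ℕ} {v : CoeffList}
    (h : isPotent p m n v = true) : eval α v ^ n = eval α v := by
  rw [← sub_eq_zero, ← eval_pow hα, ← eval_sub hp]
  exact eval_eq_zero_of_isZero α h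

theorem eval_ne_zero_of_isNonzero [Nontrivial R] (hp : 1 < p) (hm : m ≠ []) {v : CoeffList}
    (h : isNonzero p m v = true) : eval α v ≠ 0 := by
  intro h0
  have hq := Nat.one_lt_pow (List.length_eq_zero_iff.not.2 hm) hp
  have h1 := eval_eq_zero_of_isZero α h
  rw [eval_sub (by omega), eval_pow hα, h0, zero_pow (by omega)] at h1
  simp [eval] at h1

end Eval

section Soundness

variable {F : Type*} [Field F] [Fintype F] {p n : ℕ} [Fact p.Prime] [CharP F p] {m : CoeffList}

theorem exists_pow_length_eq_eval (hm : m ≠ []) (hF : Fintype.card F = p ^ m.length)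
    (h : splits p m = true) : ∃ α : F, α ^ m.length = eval α m := by
  set M : F[X] := X ^ m.length - eval X m with hM
  have hMdeg : M.degree = m.length := by
    rw [hM, degree_sub_eq_left_of_degree_lt, degree_X_pow]
    rw [degree_X_pow]
    exact degree_eval_X_lt m
  have hM0 : M.degree ≠ 0 := by rw [hMdeg]; simpa using hm
  have : Nontrivial (AdjoinRoot M) := AdjoinRoot.nontrivial M hM0
  have : CharP (AdjoinRoot M) p :=
    charP_of_injective_algebraMap (algebraMap F (AdjoinRoot M)).injective p
  have hroot : (AdjoinRoot.mk M X) ^ m.length = eval (AdjoinRoot.mk M X) m := by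
    rw [← map_eval, ← map_pow, ← sub_eq_zero, ← map_sub, AdjoinRoot.mk_self]
  have hdvd : M ∣ X ^ Fintype.card F - X := by
    have := eval_pow_eq_self_of_isPotent hroot (NeZero.ne p) h
    rwa [eval_gen hroot, ← hF, ← map_pow, ← sub_eq_zero, ← map_sub, AdjoinRoot.mk_eq_zero] at this
  have hsplits : (X ^ Fintype.card F - X : F[X]).Splits := by
    refine splits_iff_card_roots.2 ?_
    rw [FiniteField.roots_X_pow_card_sub_X,
      FiniteField.X_pow_card_sub_X_natDegree_eq _ Fintype.one_lt_card]
    rfl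
  obtain ⟨α, hα⟩ := (hsplits.of_dvd (FiniteField.X_pow_card_sub_X_ne_zero F Fintype.one_lt_card)
    hdvd).exists_eval_eq_zero hM0
  refine ⟨α, sub_eq_zero.1 ?_⟩
  rw [← hα, hM, Polynomial.eval_sub, Polynomial.eval_pow, eval_X, ← coe_evalRingHom, map_eval,
    coe_evalRingHom, eval_X]

theorem not_potentsCover_of_refutesCover (hm : m ≠ []) (hF : Fintype.card F = p ^ m.length)
    {s : List CoeffList} (h : refutesCover p m s n = true) : ¬PotentsCover F 5 n := by
  have hp : 1 < p := (Fact.out : p.Prime).one_lt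
  have hp0 : p ≠ 0 := NeZero.ne p
  simp only [refutesCover, Bool.and_eq_true, List.any_eq_true, List.all_eq_true] at h
  obtain ⟨⟨hsplits, hi⟩, γ, -, hγ⟩ := h
  obtain ⟨α, hα⟩ := exists_pow_length_eq_eval (F := F) hm hF hsplits
  have hI : eval α (sqrtNegOne p m) ^ 2 = -1 := by
    have := eval_eq_zero_of_isZero α hi
    rw [eval_sub hp0, eval_pow hα, sub_eq_zero] at this
    simpa [eval, cast_sub_one hp0] using this
  intro hcover
  obtain ⟨a, b, ha, hb, hab⟩ := hcover (eval α γ)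
  obtain ⟨c, hc, rfl⟩ : ∃ c ∈ fivePotents p m, eval α c = a := by
    have := (pow_five_eq_self_iff hI).1 ha
    simpa [fivePotents, eval_sub hp0, eval, cast_sub_one (R := F) hp0, eq_comm] using this
  refine eval_ne_zero_of_isNonzero hα hp hm (hγ c hc) ?_
  rw [eval_sub hp0, eval_pow hα, eval_sub hp0, ← hab, add_sub_cancel_left, hb, sub_self]

theorem isPrimitiveRoot_of_isPrimitive (hm : m ≠ []) (hF : Fintype.card F = p ^ m.length)
    {α : F} (hα : α ^ m.length = eval α m) (h : isPrimitive p m = true) :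
    IsPrimitiveRoot α (p ^ m.length - 1) := by
  have hp : 1 < p := (Fact.out : p.Prime).one_lt
  simp only [isPrimitive, Bool.and_eq_true, List.all_eq_true, List.mem_range, Bool.or_eq_true,
    bne_iff_ne] at h
  obtain ⟨hgen, horder⟩ := h
  have hα0 : α ≠ 0 := by
    simpa only [eval_gen hα] using eval_ne_zero_of_isNonzero hα hp hm hgen
  have hdvd : orderOf α ∣ p ^ m.length - 1 :=
    hF ▸ orderOf_dvd_of_pow_eq_one (FiniteField.pow_card_sub_one_eq_one α hα0)
  have hpos : 0 < p ^ m.length - 1 := hF ▸ Nat.sub_pos_of_lt Fintype.one_lt_card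
  rcases (Nat.le_of_dvd hpos hdvd).lt_or_eq with hlt | heq
  · refine absurd ?_ (eval_ne_zero_of_isNonzero hα hp hm
      ((horder _ hlt).resolve_left (not_not.2 (Nat.mod_eq_zero_of_dvd hdvd))))
    rw [eval_sub (NeZero.ne p), eval_pow hα, eval_gen hα, pow_orderOf_eq_one]
    simp [eval]
  · exact heq ▸ IsPrimitiveRoot.orderOf α

theorem potentsCover_of_verifiesCover (hm : m ≠ []) (hF : Fintype.card F = p ^ m.length)
    (hn : n ≠ 0) (h : verifiesCover p m n = true) : PotentsCover F 5 n := by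
  simp only [verifiesCover, Bool.and_eq_true, List.all_eq_true, List.mem_iterate,
    List.any_eq_true] at h
  obtain ⟨⟨hsplits, hprim⟩, h⟩ := h
  obtain ⟨α, hα⟩ := exists_pow_length_eq_eval (F := F) hm hF hsplits
  have hprim := isPrimitiveRoot_of_isPrimitive hm hF hα hprim
  intro γ
  by_cases hγ : γ = 0
  · exact ⟨0, 0, zero_pow (by norm_num), zero_pow hn, by rw [hγ, add_zero]⟩
  have : NeZero (p ^ m.length - 1) := ⟨hF ▸ (Nat.sub_pos_of_lt Fintype.one_lt_card).ne'⟩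
  obtain ⟨l, hl, rfl⟩ := hprim.eq_pow_of_pow_eq_one (hF ▸ FiniteField.pow_card_sub_one_eq_one γ hγ)
  obtain ⟨c, -, h5, hcn⟩ := h _ ⟨l, hl, rfl⟩
  have hcn := eval_pow_eq_self_of_isPotent hα (NeZero.ne p) hcn
  rw [eval_sub (NeZero.ne p), eval_iterate_mulGen hα] at hcn
  exact ⟨_, _, eval_pow_eq_self_of_isPotent hα (NeZero.ne p) h5, hcn, add_sub_cancel _ _⟩

end Soundness

end CoeffList

end FiniteFieldComputation

section SmallFields

/-- The pairs `(q, n)` of the classification. -/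
def classifiedPairs : List (ℕ × ℕ) :=
  [(3, 2), (5, 2), (5, 3), (7, 4), (9, 3), (9, 5), (13, 5), (13, 7), (17, 9), (25, 9), (25, 13),
    (29, 15), (41, 21), (49, 25), (53, 27), (73, 37), (81, 41), (125, 63)]

/-- Pairs `(k, b)` such that the fields with `q ≤ b` elements, where `q ≡ 1 mod 4`, are to be
tested for `n = (q - 1) / k + 1`. -/
def cardBounds : List (ℕ × ℕ) := [(2, 1270), (3, 2092), (4, 125), (6, 13), (8, 9)]

/-- Rows `(p, m, s)`, where `m` presents an extension of `𝔽_p` with a primitive generator `α`,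
and the powers of `α` with exponents in `s` are the elements used for refuting covers. The
prime `41` is listed since its least nonresidue is not a primitive root. -/
def primitivePresentations : List (ℕ × CoeffList × List ℕ) :=
  [(3, [1, 1], [1]), (3, [1, 0, 0, 1], [5]), (3, [1, 0, 0, 0, 0, 1], [7]), (5, [2, 2], [2]),
    (5, [2, 0, 1], [1]), (5, [2, 0, 2, 1], [39, 22]), (7, [2, 2], [4, 2]),
    (11, [3, 1], [3, 2]), (13, [2, 4], [35, 5]), (17, [3, 4], [63, 5]), (19, [4, 4], [11, 4]),
    (23, [2, 5], [3, 1]), (29, [2, 2], [43, 5]), (31, [7, 1], [13, 4]), (37, [2, 3], [1]),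
    (41, [6], [1]), (41, [6, 6], [7]), (43, [9, 1], [13])]

/-- A presentation of the field with `p ^ d` elements, and the elements used for refuting covers.
Prime fields are presented by their least nonresidue. -/
def presentation (p d : ℕ) : CoeffList × List CoeffList :=
  match primitivePresentations.find? fun r => r.1 == p && r.2.1.length == d with
  | some (_, m, s) => (m, s.map (CoeffList.pow p m (CoeffList.gen p m)))
  | none => (((List.range 12).find? fun g => (g ^ ((p - 1) / 2) + 1) % p == 0).toList,
      (List.range 157).map ([·]))

/-- A sieve which keeps all primes, and only primes below `47 ^ 2`. -/
def passesSieve (p : ℕ) : Bool := p != 1 &&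
  [2, 3, 5, 7, 11, 13, 17, 19, 23, 29, 31, 37, 41, 43].all fun r => p % r != 0 || p == r

theorem passesSieve_of_prime {p : ℕ} (hp : p.Prime) : passesSieve p = true := by
  simp only [passesSieve, Bool.and_eq_true, bne_iff_ne, List.all_eq_true, Bool.or_eq_true,
    beq_iff_eq]
  refine ⟨hp.ne_one, fun r hr => or_iff_not_imp_left.2 fun h => ?_⟩
  have hr1 : r ≠ 1 := by rintro rfl; simp at hr
  exact ((hp.eq_one_or_self_of_dvd r (Nat.dvd_of_mod_eq_zero (not_not.1 h))).resolve_left hr1).symm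

/-- The field with `p ^ d` elements satisfies the classification for all `n` in the range of
`cardBounds`. -/
def checksBounds (p d : ℕ) : Bool :=
  p ^ d % 4 != 1 || cardBounds.all fun b =>
    b.2 < p ^ d || (p ^ d - 1) % b.1 != 0 ||
      classifiedPairs.contains (p ^ d, (p ^ d - 1) / b.1 + 1) ||
      ((presentation p d).1.length == d && CoeffList.refutesCover p (presentation p d).1
        (presentation p d).2 ((p ^ d - 1) / b.1 + 1))

/-- The field with `p ^ d` elements is covered for all pairs of the classification. -/
def checksPairs (p d : ℕ) : Bool :=
  classifiedPairs.all fun c => c.1 != p ^ d ||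
    ((presentation p d).1.length == d && CoeffList.verifiesCover p (presentation p d).1 c.2)

theorem all_checksBounds : ((List.range 2093).all fun p => !passesSieve p ||
    (List.range 12).all fun d => d == 0 || checksBounds p d) = true := by
  decide +kernel

theorem all_checksPairs : ((List.range 126).all fun p => !passesSieve p ||
    (List.range 12).all fun d => checksPairs p d) = true := by
  decide +kernel

theorem checksBounds_eq_true {p d : ℕ} (hp : p.Prime) (hd : d ≠ 0) (hq : p ^ d ≤ 2092) :
    checksBounds p d = true := by
  have hp2093 : p < 2093 := by have := Nat.le_self_pow hd p; omega
  have hd12 : d < 12 := (Nat.pow_lt_pow_iff_right one_lt_two).1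
    ((Nat.pow_le_pow_left hp.two_le d).trans_lt (by omega))
  have := List.all_eq_true.1 all_checksBounds p (List.mem_range.2 hp2093)
  rw [passesSieve_of_prime hp, Bool.not_true, Bool.false_or] at this
  simpa [hd] using List.all_eq_true.1 this d (List.mem_range.2 hd12)

theorem checksPairs_eq_true {p d : ℕ} (hp : p.Prime) (hd : d ≠ 0) (hq : p ^ d ≤ 125) :
    checksPairs p d = true := by
  have hp126 : p < 126 := by have := Nat.le_self_pow hd p; omega
  have hd12 : d < 12 := (Nat.pow_lt_pow_iff_right one_lt_two).1
    ((Nat.pow_le_pow_left hp.two_le d).trans_lt (by omega))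
  have := List.all_eq_true.1 all_checksPairs p (List.mem_range.2 hp126)
  rw [passesSieve_of_prime hp, Bool.not_true, Bool.false_or] at this
  exact List.all_eq_true.1 this d (List.mem_range.2 hd12)

theorem classifiedPairs_bounds {c : ℕ × ℕ} (h : c ∈ classifiedPairs) : c.1 ≤ 125 ∧ c.2 ≠ 0 := by
  revert c; decide

theorem cardBounds_le {b : ℕ × ℕ} (h : b ∈ cardBounds) : b.2 ≤ 2092 := by
  revert b; decide

variable {F : Type*} [Field F] [Fintype F]

variable (F) in
theorem exists_prime_card_eq_pow : ∃ p d, p.Prime ∧ CharP F p ∧ d ≠ 0 ∧ Fintype.card F = p ^ d := by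
  obtain ⟨p, _⟩ := CharP.exists F
  obtain ⟨d, hp, hcard⟩ := FiniteField.card F p
  exact ⟨p, d, hp, inferInstance, d.ne_zero, hcard⟩

theorem potentsCover_of_mem_classifiedPairs {n : ℕ} (h : (Fintype.card F, n) ∈ classifiedPairs) :
    PotentsCover F 5 n := by
  obtain ⟨p, d, hp, _, hd, hcard⟩ := exists_prime_card_eq_pow F
  have : Fact p.Prime := ⟨hp⟩
  obtain ⟨hq, hn⟩ := classifiedPairs_bounds h
  have hcheck := List.all_eq_true.1 (checksPairs_eq_true hp hd (hcard ▸ hq)) _ h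
  simp only [hcard, bne_self_eq_false, Bool.false_or, Bool.and_eq_true, beq_iff_eq] at hcheck
  obtain ⟨hlength, hverify⟩ := hcheck
  exact CoeffList.potentsCover_of_verifiesCover (by rintro hm; simp [hm] at hlength; omega)
    (hlength.symm ▸ hcard) hn hverify

theorem mem_classifiedPairs_of_potentsCover {k b : ℕ} (hkb : (k, b) ∈ cardBounds)
    (hq4 : Fintype.card F % 4 = 1) (hqb : Fintype.card F ≤ b) (hk : k ∣ Fintype.card F - 1)
    (h : PotentsCover F 5 ((Fintype.card F - 1) / k + 1)) :
    (Fintype.card F, (Fintype.card F - 1) / k + 1) ∈ classifiedPairs := by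
  obtain ⟨p, d, hp, _, hd, hcard⟩ := exists_prime_card_eq_pow F
  have : Fact p.Prime := ⟨hp⟩
  have hcheck := checksBounds_eq_true hp hd (hcard ▸ hqb.trans (cardBounds_le hkb))
  rw [checksBounds, ← hcard, hq4] at hcheck
  have hcheck := List.all_eq_true.1 hcheck _ hkb
  simp only [hqb.not_gt, decide_false, Nat.mod_eq_zero_of_dvd hk, bne_self_eq_false,
    Bool.false_or, Bool.or_eq_true, List.contains_iff_mem, Bool.and_eq_true, beq_iff_eq] at hcheck
  refine hcheck.resolve_right fun ⟨hlength, hrefute⟩ => ?_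
  exact CoeffList.not_potentsCover_of_refutesCover (by rintro hm; simp [hm] at hlength; omega)
    (hlength.symm ▸ hcard) hrefute h

end SmallFields

section Classification

open Finset

variable {F : Type*} [Field F] [Fintype F] {k m : ℕ}

theorem not_potentsCover_five_of_even (hm : m ≠ 0) (hq : 2 * m < Fintype.card F)
    (heven : Even (Fintype.card F)) : ¬PotentsCover F 5 (m + 1) := by
  classical
  intro h
  have hn : m + 1 ≠ 0 := m.succ_ne_zero
  have hchar : ringChar F = 2 := FiniteField.even_card_iff_char_two.2 (Nat.even_iff.1 heven)
  have h2 : (2 : F) = 0 := by exact_mod_cast hchar ▸ ringChar.Nat.cast_ringChar (R := F)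
  have hlt := h.card_lt (by norm_num) hn
  have hle := Nat.mul_le_mul
    ((card_le_card (potents_five_of_two_eq_zero h2)).trans card_le_two)
    (card_potents_le (F := F) (n := m + 1) (by omega))
  have := Nat.even_iff.1 heven
  omega

theorem mem_classifiedPairs_of_card_mod_four_eq_three (hq : Fintype.card F = k * m + 1)
    (hm : m ≠ 0) (hk : 2 ≤ k) (h4 : Fintype.card F % 4 = 3) (h : PotentsCover F 5 (m + 1)) :
    (Fintype.card F, m + 1) ∈ classifiedPairs := by
  classical
  have hn : m + 1 ≠ 0 := m.succ_ne_zero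
  have hF : ringChar F ≠ 2 := mt FiniteField.even_card_iff_char_two.1 (by omega)
  have hI : ¬IsSquare (-1 : F) := by rw [FiniteField.isSquare_neg_one_iff]; simp [h4]
  replace h : PotentsCover F 3 (m + 1) := by
    simpa only [PotentsCover, pow_five_eq_self_iff_of_not_isSquare hI] using h
  have hcard3 := card_potents_three (Ring.two_ne_zero hF)
  have hcard : #(potents F (m + 1)) ≤ m + 1 := card_potents_le (by omega)
  have hlt := h.card_lt (by norm_num) hn
  rw [hcard3] at hlt
  obtain rfl | rfl | hk : k = 2 ∨ k = 3 ∨ 4 ≤ k := by omega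
  · have hle := PotentsCover.card_le_of_half_of_not_isSquare hF hI
      (by rwa [show Fintype.card F / 2 = m by omega])
    obtain rfl | rfl : m = 1 ∨ m = 3 := by omega
    all_goals rw [hq]; decide
  · have hle := h.card_le_mul (by decide) hn (potents_subset_potents (d := 2) (by omega))
    rw [hcard3] at hle
    omega
  · have := Nat.mul_le_mul_right m hk
    omega

theorem card_le_of_potentsCover_quarter (h4 : Fintype.card F % 4 = 1)
    (h : PotentsCover F 5 ((Fintype.card F - 1) / 4 + 1)) : Fintype.card F ≤ 125 := by
  have hF : ringChar F ≠ 2 := mt FiniteField.even_card_iff_char_two.1 (by omega)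
  have hI : IsSquare (-1 : F) := by rw [FiniteField.isSquare_neg_one_iff]; simp [h4]
  have hhalf := h.mul_add_one 2
  rw [show 2 * ((Fintype.card F - 1) / 4) = (Fintype.card F - 1) / 2 by omega] at hhalf
  have hle := PotentsCover.card_le_of_half_of_isSquare hF hI
    (by rwa [show Fintype.card F / 2 = (Fintype.card F - 1) / 2 by omega])
  exact (classifiedPairs_bounds (mem_classifiedPairs_of_potentsCover (k := 2) (by decide) h4 hle
    (by omega) hhalf)).1

theorem mem_classifiedPairs_of_card_mod_four_eq_one (hq : Fintype.card F = k * m + 1)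
    (hm : m ≠ 0) (hk : 2 ≤ k) (h4 : Fintype.card F % 4 = 1) (h : PotentsCover F 5 (m + 1)) :
    (Fintype.card F, m + 1) ∈ classifiedPairs := by
  classical
  have hn : m + 1 ≠ 0 := m.succ_ne_zero
  have hF : ringChar F ≠ 2 := mt FiniteField.even_card_iff_char_two.1 (by omega)
  have hI : IsSquare (-1 : F) := by rw [FiniteField.isSquare_neg_one_iff]; simp [h4]
  have hcard5 : #(potents F 5) = 5 := by
    obtain ⟨I, hI⟩ := hI
    exact card_potents_five (Ring.two_ne_zero hF) (I := I) (by rw [pow_two, hI])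
  have hcard : #(potents F (m + 1)) ≤ m + 1 := card_potents_le (by omega)
  have hlt := h.card_lt (by norm_num) hn
  rw [hcard5] at hlt
  have hm' : (Fintype.card F - 1) / k = m := by
    rw [hq, Nat.add_sub_cancel, Nat.mul_div_cancel_left m (by omega)]
  have hfinite {b : ℕ} (hb : (k, b) ∈ cardBounds) (hqb : Fintype.card F ≤ b) :
      (Fintype.card F, m + 1) ∈ classifiedPairs :=
    hm' ▸ mem_classifiedPairs_of_potentsCover hb h4 hqb ⟨m, by omega⟩ (hm'.symm ▸ h)
  obtain rfl | rfl | rfl | rfl | rfl | hk : k = 2 ∨ k = 3 ∨ k = 4 ∨ k = 5 ∨ k = 6 ∨ 7 ≤ k := by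
    omega
  · exact hfinite (by decide) (PotentsCover.card_le_of_half_of_isSquare hF hI
      (by rwa [show Fintype.card F / 2 = m by omega]))
  · exact hfinite (by decide) (PotentsCover.card_le_of_third hF (by omega) hI
      (by rwa [show Fintype.card F / 3 = m by omega]))
  · exact hfinite (by decide) (card_le_of_potentsCover_quarter h4 (hm'.symm ▸ h))
  · have hle := h.card_le_mul (by decide) hn (potents_subset_potents (d := 4) (by omega))
    rw [hcard5] at hle
    omega
  · exact hfinite (b := 13) (by decide) (by omega)
  · have := Nat.mul_le_mul_right m hk
    obtain rfl : m = 1 := by omega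
    obtain rfl : k = 8 := by omega
    exact hfinite (b := 9) (by decide) (by omega)

theorem potentsCover_five_iff_mem_classifiedPairs {n : ℕ} (hn : 1 < n) (hnq : n < Fintype.card F)
    (hdvd : (n - 1) ∣ (Fintype.card F - 1)) :
    PotentsCover F 5 n ↔ (Fintype.card F, n) ∈ classifiedPairs := by
  refine ⟨fun h => ?_, potentsCover_of_mem_classifiedPairs⟩
  obtain ⟨m, rfl⟩ : ∃ m, n = m + 1 := ⟨n - 1, by omega⟩
  obtain ⟨k, hk⟩ := hdvd
  rw [Nat.add_sub_cancel] at hk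
  have hq : Fintype.card F = k * m + 1 := by rw [mul_comm]; omega
  have hk2 : 2 ≤ k := by
    by_contra! hk1
    have := Nat.mul_le_mul_right m (Nat.le_of_lt_succ hk1)
    omega
  obtain heven | h1 | h3 : Fintype.card F % 2 = 0 ∨ Fintype.card F % 4 = 1 ∨
      Fintype.card F % 4 = 3 := by omega
  · have := Nat.mul_le_mul_right m hk2
    exact absurd h (not_potentsCover_five_of_even (by omega) (by omega) (Nat.even_iff.2 heven))
  · exact mem_classifiedPairs_of_card_mod_four_eq_one hq (by omega) hk2 h1 h
  · exact mem_classifiedPairs_of_card_mod_four_eq_three hq (by omega) hk2 h3 h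

end Classification

end SumOfPotents

/-- Every element of the finite field `F` with `q` elements is the sum of a `5`-potent
and an `n`-potent (with `1 < n < q` and `(n-1) ∣ (q-1)`) if and only if `(q, n)` is one of
the 18 listed pairs. -/
theorem sum_of_five_potent_and_n_potent_iff
    (q n : ℕ) (hq : IsPrimePow q)
    (F : Type*) [Field F] [Fintype F] (hF : Fintype.card F = q)
    (hn1 : 1 < n) (hnq : n < q) (hdvd : (n - 1) ∣ (q - 1)) :
    (∀ γ : F, ∃ a b : F, a ^ 5 = a ∧ b ^ n = b ∧ a + b = γ) ↔
      (q, n) ∈ ({(3, 2), (5, 2), (5, 3), (7, 4), (9, 3), (9, 5), (13, 5), (13, 7),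
        (17, 9), (25, 9), (25, 13), (29, 15), (41, 21), (49, 25), (53, 27),
        (73, 37), (81, 41), (125, 63)} : Set (ℕ × ℕ)) := by
  subst hF
  refine (SumOfPotents.potentsCover_five_iff_mem_classifiedPairs hn1 hnq hdvd).trans ?_
  simp [SumOfPotents.classifiedPairs]
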